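/- (Density of Pell–Abel parameters) Let g ≥ 0 be an integer, let a_0 < b_0 < a_1 < ⋯ < a_g < b_g be real numbers, and let ε > 0. Then there exist real numbers a'_0 < b'_0 < a'_1 < ⋯ < a'_g < b'_g with |a'_j − a_j| < ε and |b'_j − b_j| < ε for all j, such that, setting D'(X) = ∏_{j=0}^{g}(X−a'_j)(X−b'_j), the Pell–Abel equation for D' has a nontrivial solution: there exist polynomials P, Q ∈ ℝ[X] with deg P > 0, Q ≠ 0, and a constant c ≠ 0 such that P² − D'·Q² = c. -/

import Mathlib

open MeasureTheory Polynomial Set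
open scoped NNReal ENNReal

/-!
Let `E = ⋃ⱼ [aⱼ, bⱼ]`. The Pell–Abel equation for `D` is solvable as soon as the harmonic measures
`ωₖ` of the bands, seen from infinity, are all rational; and rational harmonic measures can be
reached by moving the right endpoints arbitrarily little.

*Solvability.* There is a unique monic `r` of degree `g` for which the integral of `r / √|D|` over
every gap of `E` vanishes (`rpoly`). On the closed upper half-plane `Θ = ∫ r dz/√D` is the complex
Green function of `E` (`exists_green`): `Re Θ = 0` on `E`, while `Im Θ` is constant on the components
of `ℝ \ E` and changes by `π ωₖ` across band `k`. If `n ωₖ` is an integer for all `k`, then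
`cosh (n Θ)` is real on `ℝ` and grows polynomially, so by reflection and Liouville it is a polynomial
`P` (`exists_cosh_poly`). Differentiating, `D P'² = n² r² (P² - 1)`, and `D` is coprime to `r`, so
`P² - 1 = D Q²` with `Q = P' / (n r)` (`pell_of_rational`).

*Density.* Keep every `aⱼ` and the endpoint `b_g`, and only increase the other `bⱼ`. Enlarging the
bands lowers the Green function (`green_mono`, from the minimum principle `re_nonneg_of_mixed` with
Dirichlet data on the bands and Neumann data off them), hence lowers its normal derivative on every
unmoved band and with it the harmonic measure (`hm_mono`); for the last band, which never moves, the
decrease is strict (`hm_strict`). The harmonic measures depend continuously on the endpoints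
(`hm_continuousOn`). Choose rationals `qⱼ` slightly above `ωⱼ` for `j < g`, and among the nearby
configurations with `ωⱼ ≤ qⱼ` for all `j < g` take one of maximal total length. No endpoint reaches
its upper bound, since then `ω_g = 1 - ∑ ωⱼ` would have dropped by a definite amount, more than the
`qⱼ` allow. If `ωⱼ < qⱼ` for some `j`, increasing `bⱼ` a little would keep all the constraints, by
monotonicity for the other bands and continuity for band `j`, contradicting maximality. So all `ωⱼ`
are rational (`exists_rational`).
-/

/-! ### Primitives on the closed upper half-plane -/

theorem exists_primitive_upper (f : ℂ → ℂ) (hd : DifferentiableOn ℂ f {z | 0 < z.im}) :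
    ∃ F : ℂ → ℂ, ∀ z : ℂ, 0 < z.im → HasDerivAt F (f z) z := by
  -- transport to the unit disc by the Cayley transform
  let φ : ℂ → ℂ := fun w => Complex.I * (1 + w) / (1 - w)
  have hne : ∀ w ∈ Metric.ball (0 : ℂ) 1, 1 - w ≠ 0 := by
    intro w hw h
    have : w = 1 := by linear_combination -h
    simp [this] at hw
  have hφd : ∀ w ∈ Metric.ball (0 : ℂ) 1, HasDerivAt φ (2 * Complex.I / (1 - w) ^ 2) w := by
    intro w hw
    have h1 := hne w hw
    have := (((hasDerivAt_id w).const_add 1).const_mul Complex.I).div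
      ((hasDerivAt_id w).const_sub 1) h1
    refine this.congr_deriv ?_
    simp only [id]; congr 1; ring
  have hφim : ∀ w ∈ Metric.ball (0 : ℂ) 1, 0 < (φ w).im := by
    intro w hw
    have h1 := hne w hw
    have h2 : (φ w).im = (1 - Complex.normSq w) / Complex.normSq (1 - w) := by
      simp only [φ, Complex.div_im, Complex.normSq_apply]
      simp
      ring
    rw [h2]
    refine div_pos ?_ (Complex.normSq_pos.mpr h1)
    rw [Complex.normSq_eq_norm_sq]
    simp at hw
    nlinarith [norm_nonneg w]
  have hg : DifferentiableOn ℂ (fun w => f (φ w) * (2 * Complex.I / (1 - w) ^ 2))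
      (Metric.ball 0 1) := by
    refine DifferentiableOn.mul ?_ ?_
    · exact hd.comp (fun w hw => (hφd w hw).differentiableAt.differentiableWithinAt)
        (fun w hw => hφim w hw)
    · refine DifferentiableOn.div (by fun_prop) (by fun_prop) ?_
      intro w hw
      exact pow_ne_zero 2 (hne w hw)
  obtain ⟨G, hG⟩ := hg.isExactOn_ball
  refine ⟨fun z => G ((z - Complex.I) / (z + Complex.I)), fun z hz => ?_⟩
  have hzI : z + Complex.I ≠ 0 := by
    intro h
    have := congrArg Complex.im h
    simp at this; linarith
  have hmem : (z - Complex.I) / (z + Complex.I) ∈ Metric.ball (0 : ℂ) 1 := by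
    rw [mem_ball_zero_iff, norm_div, div_lt_one (norm_pos_iff.mpr hzI)]
    refine lt_of_pow_lt_pow_left₀ 2 (norm_nonneg _) ?_
    rw [← Complex.normSq_eq_norm_sq, ← Complex.normSq_eq_norm_sq, Complex.normSq_apply,
      Complex.normSq_apply]
    simp; nlinarith
  have hψ : HasDerivAt (fun z => (z - Complex.I) / (z + Complex.I))
      (2 * Complex.I / (z + Complex.I) ^ 2) z := by
    have := ((hasDerivAt_id z).sub_const Complex.I).div ((hasDerivAt_id z).add_const Complex.I) hzI
    refine this.congr_deriv ?_
    simp only [id]; congr 1; ring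
  have := (hG _ hmem).comp z hψ
  refine this.congr_deriv ?_
  have e1 : 1 - (z - Complex.I) / (z + Complex.I) = 2 * Complex.I / (z + Complex.I) := by
    field_simp; ring
  have e2 : φ ((z - Complex.I) / (z + Complex.I)) = z := by
    simp only [φ]; rw [e1]; field_simp; ring
  beta_reduce
  rw [e2, e1]
  field_simp

open Filter Topology in
/-- A primitive of `f` extends continuously to the closed upper half-plane when `f` is at worst of
inverse square root type near the real axis; its increments along the axis are then the integrals of
the boundary values of `f`. -/
theorem exists_closed_primitive (f : ℂ → ℂ) (hd : DifferentiableOn ℂ f {z | 0 < z.im})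
    (hb : ∀ R : ℝ, ∃ C : ℝ, ∀ z : ℂ, 0 < z.im → ‖z‖ ≤ R → ‖f z‖ ≤ C * z.im ^ (-(1 / 2) : ℝ))
    (hB : ∀ R : ℝ, ∃ B : ℝ → ℝ, LocallyIntegrable B ∧
      ∀ᵐ x : ℝ, ∀ y : ℝ, |x| ≤ R → 0 < y → y ≤ 1 → ‖f (x + y * Complex.I)‖ ≤ B x)
    (hlim : ∀ᵐ x : ℝ, Tendsto (fun y : ℝ => f (x + y * Complex.I)) (𝓝[>] 0) (𝓝 (f x))) :
    ∃ Θ : ℂ → ℂ, ContinuousOn Θ {z | 0 ≤ z.im} ∧ (∀ z : ℂ, 0 < z.im → HasDerivAt Θ (f z) z) ∧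
      ∀ x x' : ℝ, Θ x' - Θ x = ∫ t in x..x', f t := by
  obtain ⟨F, hF⟩ := exists_primitive_upper f hd
  -- integrating down from height one above `z` gives a formula that makes sense up to the axis
  let Θ : ℂ → ℂ := fun z => F (z + Complex.I) - Complex.I * ∫ τ in (0 : ℝ)..1, f (z + τ * Complex.I)
  have hvert : ∀ z : ℂ, 0 ≤ z.im → ContinuousOn (fun τ : ℝ => f (z + τ * Complex.I)) (Ioi 0) := by
    intro z hz
    refine hd.continuousOn.comp (by fun_prop) ?_
    intro τ hτ
    have : 0 < τ := hτ
    simp; linarith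
  have hcont : ContinuousOn Θ {z | 0 ≤ z.im} := by
    intro z₀ hz₀
    have hz₀' : 0 ≤ z₀.im := hz₀
    refine ContinuousWithinAt.sub ?_ (continuousWithinAt_const.mul ?_)
    · have h1 : ContinuousAt F (z₀ + Complex.I) := (hF _ (by simp; linarith)).continuousAt
      exact (ContinuousAt.comp (f := fun z => z + Complex.I) h1
        (by fun_prop)).continuousWithinAt
    · obtain ⟨C, hC⟩ := hb (‖z₀‖ + 2)
      refine intervalIntegral.continuousWithinAt_of_dominated_interval
        (bound := fun τ => |C| * τ ^ (-(1 / 2) : ℝ)) ?_ ?_ ?_ ?_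
      · filter_upwards [self_mem_nhdsWithin] with z hz
        refine ContinuousOn.aestronglyMeasurable ?_ measurableSet_uIoc
        refine (hvert z hz).mono ?_
        rw [uIoc_of_le zero_le_one]
        exact fun t ht => ht.1
      · have hnear : ∀ᶠ z in 𝓝[{z : ℂ | 0 ≤ z.im}] z₀, ‖z‖ < ‖z₀‖ + 1 := by
          refine nhdsWithin_le_nhds ?_
          exact continuous_norm.continuousAt.eventually_lt continuousAt_const (by linarith)
        filter_upwards [self_mem_nhdsWithin, hnear] with z hz hz1
        refine Eventually.of_forall fun τ hτ => ?_
        rw [uIoc_of_le zero_le_one] at hτ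
        have hz' : 0 ≤ z.im := hz
        have him : (z + τ * Complex.I).im = z.im + τ := by simp
        have h1 := hC (z + τ * Complex.I) (by rw [him]; linarith [hτ.1]) (by
          refine (norm_add_le _ _).trans ?_
          have : ‖(τ : ℂ) * Complex.I‖ ≤ 1 := by
            rw [norm_mul, Complex.norm_I, mul_one, Complex.norm_real, Real.norm_eq_abs,
              abs_of_pos hτ.1]; exact hτ.2
          linarith)
        rw [him] at h1
        refine h1.trans (mul_le_mul (le_abs_self C) ?_ (Real.rpow_nonneg (by linarith [hτ.1]) _)
          (abs_nonneg C))
        exact Real.rpow_le_rpow_of_nonpos hτ.1 (by linarith) (by norm_num)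
      · exact (intervalIntegral.intervalIntegrable_rpow' (by norm_num)).const_mul _
      · refine Eventually.of_forall fun τ hτ => ?_
        rw [uIoc_of_le zero_le_one] at hτ
        have h1 : ContinuousAt f (z₀ + τ * Complex.I) := by
          refine hd.continuousOn.continuousAt ?_
          refine (isOpen_lt continuous_const Complex.continuous_im).mem_nhds ?_
          simp; linarith [hτ.1]
        exact (ContinuousAt.comp (f := fun z => z + τ * Complex.I) h1
          (by fun_prop)).continuousWithinAt
  have heq : ∀ z : ℂ, 0 < z.im → Θ z = F z := by
    intro z hz
    have h1 : ∫ τ in (0 : ℝ)..1, f (z + τ * Complex.I) * Complex.I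
        = F (z + (1 : ℝ) * Complex.I) - F (z + (0 : ℝ) * Complex.I) := by
      refine intervalIntegral.integral_eq_sub_of_hasDerivAt
        (f := fun τ : ℝ => F (z + τ * Complex.I)) ?_ ?_
      · intro τ hτ
        rw [uIcc_of_le zero_le_one] at hτ
        have h2 := hF (z + τ * Complex.I) (by simp; linarith [hτ.1])
        have h3 : HasDerivAt (fun τ : ℝ => z + τ * Complex.I) Complex.I τ := by
          simpa using ((Complex.ofRealCLM.hasDerivAt (x := τ)).mul_const Complex.I).const_add z
        exact h2.comp τ h3
      · refine ContinuousOn.intervalIntegrable ?_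
        refine ContinuousOn.mul ?_ continuousOn_const
        refine hd.continuousOn.comp (by fun_prop) ?_
        intro τ hτ
        rw [uIcc_of_le zero_le_one] at hτ
        simp; linarith [hτ.1]
    rw [intervalIntegral.integral_mul_const] at h1
    simp only [Θ]
    rw [mul_comm, h1]; simp
  refine ⟨Θ, hcont, fun z hz => ?_, ?_⟩
  · refine (hF z hz).congr_of_eventuallyEq ?_
    filter_upwards [(isOpen_lt continuous_const Complex.continuous_im).mem_nhds hz] with w hw
      using heq w hw
  · intro x x'
    have hev : ∀ᶠ y : ℝ in 𝓝[>] 0, 0 < y ∧ y ≤ 1 := by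
      have : Ioc (0 : ℝ) 1 ∈ 𝓝[>] (0 : ℝ) := Ioc_mem_nhdsGT one_pos
      filter_upwards [this] with y hy using hy
    have hline : ∀ y : ℝ, 0 < y → Continuous (fun t : ℝ => f (t + y * Complex.I)) := by
      intro y hy
      refine hd.continuousOn.comp_continuous (by fun_prop) ?_
      intro x; simpa using hy
    obtain ⟨B, hBi, hBb⟩ := hB (max |x| |x'|)
    have h1 : Tendsto (fun y : ℝ => ∫ t in x..x', f (t + y * Complex.I)) (𝓝[>] 0)
        (𝓝 (∫ t in x..x', f t)) := by
      refine intervalIntegral.tendsto_integral_filter_of_dominated_convergence B ?_ ?_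
        (hBi.integrableOn_isCompact isCompact_uIcc).intervalIntegrable ?_
      · filter_upwards [hev] with y hy using (hline y hy.1).aestronglyMeasurable
      · filter_upwards [hev] with y hy
        refine hBb.mono fun t hbt ht => hbt y ?_ hy.1 hy.2
        have ht' := uIoc_subset_uIcc ht
        rcases mem_uIcc.mp ht' with h | h
        · exact (abs_le_max_abs_abs h.1 h.2)
        · rw [max_comm]; exact (abs_le_max_abs_abs h.1 h.2)
      · filter_upwards [hlim] with t ht _ using ht
    have hT : ∀ t : ℝ, Tendsto (fun y : ℝ => Θ (t + y * Complex.I)) (𝓝[>] 0) (𝓝 (Θ t)) := by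
      intro t
      have h2 : Tendsto (fun y : ℝ => (t : ℂ) + y * Complex.I) (𝓝[>] 0)
          (𝓝[{z | 0 ≤ z.im}] (t : ℂ)) := by
        refine tendsto_nhdsWithin_iff.mpr ⟨?_, ?_⟩
        · have : Continuous fun y : ℝ => (t : ℂ) + y * Complex.I := by fun_prop
          have h3 := this.tendsto 0
          simp only [Complex.ofReal_zero, zero_mul, add_zero] at h3
          exact h3.mono_left nhdsWithin_le_nhds
        · filter_upwards [hev] with y hy
          simpa using hy.1.le
      exact (hcont t (by simp)).tendsto.comp h2
    refine tendsto_nhds_unique ((hT x').sub (hT x)) (h1.congr' ?_)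
    filter_upwards [hev] with y hy
    rw [heq _ (by simpa using hy.1), heq _ (by simpa using hy.1)]
    refine intervalIntegral.integral_eq_sub_of_hasDerivAt
      (f := fun t : ℝ => F (t + y * Complex.I)) ?_ ((hline y hy.1).intervalIntegrable _ _)
    intro t _
    have h2 := hF (t + y * Complex.I) (by simpa using hy.1)
    have h3 : HasDerivAt (fun t : ℝ => (t : ℂ) + y * Complex.I) 1 t := by
      simpa using (Complex.ofRealCLM.hasDerivAt (x := t)).add_const ((y : ℂ) * Complex.I)
    have h4 := h2.comp t h3
    rw [mul_one] at h4
    exact h4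

/-! ### Reflection and polynomial growth -/

/-- A continuous function on a disc that is holomorphic off the real axis is holomorphic
(Morera). -/
theorem differentiableOn_ball_of_off_real (f : ℂ → ℂ) (c : ℂ) (R : ℝ)
    (hc : ContinuousOn f (Metric.ball c R))
    (hd : ∀ z ∈ Metric.ball c R, z.im ≠ 0 → DifferentiableAt ℂ f z) :
    DifferentiableOn ℂ f (Metric.ball c R) := by
  have hcons : Complex.IsConservativeOn f (Metric.ball c R) := by
    intro z w hzw
    rw [← add_eq_zero_iff_eq_neg, Complex.wedgeIntegral_add_wedgeIntegral_eq]
    by_cases h0 : (0 : ℝ) ∈ uIcc z.im w.im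
    swap
    · -- the rectangle misses the real axis
      refine Complex.integral_boundary_rect_eq_zero_of_differentiableOn f z w fun u hu => ?_
      refine (hd u (hzw hu) fun h => h0 ?_).differentiableWithinAt
      rw [← h]; exact hu.2
    have hvert : ∀ x ∈ uIcc z.re w.re, ∀ y1 ∈ uIcc z.im w.im, ∀ y2 ∈ uIcc z.im w.im,
        IntervalIntegrable (fun y : ℝ => f (x + y * Complex.I)) volume y1 y2 := by
      intro x hx y1 hy1 y2 hy2
      refine ContinuousOn.intervalIntegrable (hc.comp (by fun_prop) fun y hy => hzw ?_)
      exact ⟨by simpa using hx, by simpa using uIcc_subset_uIcc hy1 hy2 hy⟩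
    -- each of the two pieces cut off by the real axis has vanishing boundary integral
    have key1 := Complex.integral_boundary_rect_eq_zero_of_continuousOn_of_differentiableOn f
      z (w.re : ℂ) (hc.mono fun u hu => hzw ⟨hu.1, uIcc_subset_uIcc left_mem_uIcc h0 hu.2⟩) (by
        intro u hu
        have hu' : u ∈ (uIcc z.re w.re) ×ℂ (uIcc z.im w.im) :=
          ⟨Ioo_subset_Icc_self hu.1,
            uIcc_subset_uIcc left_mem_uIcc h0 (Ioo_subset_Icc_self hu.2)⟩
        refine (hd u (hzw hu') ?_).differentiableWithinAt
        have h2 := hu.2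
        simp only [Complex.ofReal_im, mem_preimage, mem_Ioo, inf_lt_iff, lt_sup_iff] at h2
        rcases h2 with ⟨h3 | h3, h4 | h4⟩ <;> intro h5 <;> linarith)
    have key2 := Complex.integral_boundary_rect_eq_zero_of_continuousOn_of_differentiableOn f
      (z.re : ℂ) w (hc.mono fun u hu => hzw ⟨hu.1, uIcc_subset_uIcc h0 right_mem_uIcc hu.2⟩) (by
        intro u hu
        have hu' : u ∈ (uIcc z.re w.re) ×ℂ (uIcc z.im w.im) :=
          ⟨Ioo_subset_Icc_self hu.1,
            uIcc_subset_uIcc h0 right_mem_uIcc (Ioo_subset_Icc_self hu.2)⟩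
        refine (hd u (hzw hu') ?_).differentiableWithinAt
        have h2 := hu.2
        simp only [Complex.ofReal_im, mem_preimage, mem_Ioo, inf_lt_iff, lt_sup_iff] at h2
        rcases h2 with ⟨h3 | h3, h4 | h4⟩ <;> intro h5 <;> linarith)
    simp only [Complex.ofReal_re, Complex.ofReal_im] at key1 key2
    have e1 := intervalIntegral.integral_add_adjacent_intervals
      (hvert w.re right_mem_uIcc z.im left_mem_uIcc 0 h0)
      (hvert w.re right_mem_uIcc 0 h0 w.im right_mem_uIcc)
    have e2 := intervalIntegral.integral_add_adjacent_intervals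
      (hvert z.re left_mem_uIcc z.im left_mem_uIcc 0 h0)
      (hvert z.re left_mem_uIcc 0 h0 w.im right_mem_uIcc)
    rw [← e1, ← e2, smul_add, smul_add]
    linear_combination key1 + key2
  have h1 : Complex.IsExactOn f (Metric.ball c R) :=
    ⟨_, fun w hw => hcons.hasDerivAt_wedgeIntegral hc hw⟩
  exact h1.differentiableOn Metric.isOpen_ball

/-- A continuous function on `ℂ` that is holomorphic off the real axis is entire. -/
theorem differentiable_of_off_real (f : ℂ → ℂ) (hc : Continuous f)
    (hd : ∀ z : ℂ, z.im ≠ 0 → DifferentiableAt ℂ f z) : Differentiable ℂ f := fun z =>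
  (differentiableOn_ball_of_off_real f z 1 hc.continuousOn fun w _ hw => hd w hw).differentiableAt
    (Metric.ball_mem_nhds z one_pos)

open Filter Topology in
/-- Liouville: by the Cauchy estimates, an entire function of polynomial growth is a polynomial. -/
theorem entire_polynomial (f : ℂ → ℂ) (hd : Differentiable ℂ f) (K : ℝ) (m : ℕ)
    (hK : ∀ z, ‖f z‖ ≤ K * (1 + ‖z‖) ^ m) : ∃ p : ℂ[X], ∀ z, f z = p.eval z := by
  have hz : ∀ n, m < n → iteratedDeriv n f 0 = 0 := by
    intro n hn
    rw [← norm_le_zero_iff]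
    have hb : ∀ R : ℝ, 1 ≤ R → ‖iteratedDeriv n f 0‖ ≤ (n.factorial * (|K| * 2 ^ m)) * R⁻¹ := by
      intro R hR
      have hR0 : 0 < R := by linarith
      have h1 := Complex.norm_iteratedDeriv_le_of_forall_mem_sphere_norm_le (f := f) (c := 0)
        (C := |K| * (2 * R) ^ m) n hR0 hd.diffContOnCl (by
          intro z hz
          have hz' : ‖z‖ = R := by simpa using hz
          refine (hK z).trans ?_
          rw [hz']
          gcongr
          · exact le_abs_self K
          · linarith)
      refine h1.trans ?_
      rw [mul_assoc, mul_div_assoc, mul_pow]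
      have : R ^ m * R ≤ R ^ n := by
        rw [← pow_succ]; exact pow_le_pow_right₀ hR hn
      gcongr ?_ * ?_
      rw [div_le_iff₀ (by positivity), mul_assoc, mul_assoc]
      gcongr ?_ * (?_ * ?_)
      rw [inv_mul_eq_div, le_div_iff₀ hR0]
      exact this
    refine le_of_tendsto_of_tendsto' (f := fun _ => ‖iteratedDeriv n f 0‖)
      (g := fun k : ℕ => (n.factorial * (|K| * 2 ^ m)) * ((k : ℝ) + 1)⁻¹) (b := atTop)
      tendsto_const_nhds ?_ (fun k => hb _ (by simp))
    have := (tendsto_one_div_add_atTop_nhds_zero_nat (𝕜 := ℝ)).const_mul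
      (n.factorial * (|K| * 2 ^ m))
    simpa using this
  refine ⟨∑ n ∈ Finset.range (m + 1), Polynomial.C ((n.factorial : ℂ)⁻¹ * iteratedDeriv n f 0) *
    X ^ n, fun z => ?_⟩
  have h1 := Complex.hasSum_taylorSeries_of_entire hd 0 z
  rw [← h1.tsum_eq, tsum_eq_sum (s := Finset.range (m + 1))]
  · rw [eval_finsetSum]
    refine Finset.sum_congr rfl fun n _ => ?_
    simp; ring
  · intro n hn
    rw [hz n (by simpa [Nat.lt_succ_iff] using hn)]; simp

/-- A function on the closed upper half-plane that is real on the axis and of polynomial growth is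
a real polynomial, by Schwarz reflection and Liouville. -/
theorem real_polynomial_of_upper (W : ℂ → ℂ) (hc : ContinuousOn W {z | 0 ≤ z.im})
    (hd : DifferentiableOn ℂ W {z | 0 < z.im}) (hreal : ∀ x : ℝ, (W x).im = 0) (K : ℝ) (m : ℕ)
    (hK : ∀ z : ℂ, 0 ≤ z.im → ‖W z‖ ≤ K * (1 + ‖z‖) ^ m) :
    ∃ P : ℝ[X], ∀ z : ℂ, 0 ≤ z.im → W z = aeval z P := by
  classical
  let V : ℂ → ℂ := fun z => if 0 ≤ z.im then W z else star (W (star z))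
  have hVc : Continuous V := by
    refine continuous_if_le continuous_const Complex.continuous_im hc ?_ ?_
    · refine continuous_star.comp_continuousOn (hc.comp continuous_star.continuousOn ?_)
      intro z hz
      have : z.im ≤ 0 := hz
      simpa using this
    · intro z hz
      have : z = (z.re : ℂ) := Complex.ext (by simp) (by simp [← hz])
      rw [this]
      simp only [Complex.star_def, Complex.conj_ofReal]
      exact (Complex.conj_eq_iff_im.mpr (hreal _)).symm
  have hVd : Differentiable ℂ V := by
    refine differentiable_of_off_real V hVc ?_
    intro z hz
    rcases lt_or_gt_of_ne hz with h | h
    · have h1 : DifferentiableAt ℂ W (star z) := hd.differentiableAt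
        ((isOpen_lt continuous_const Complex.continuous_im).mem_nhds (by simpa using h))
      have h2 : DifferentiableAt ℂ (star ∘ W ∘ star) z := by
        have := h1.star_star
        simpa using this
      refine h2.congr_of_eventuallyEq ?_
      filter_upwards [(isOpen_lt Complex.continuous_im continuous_const).mem_nhds h] with w hw
      have : ¬ (0 ≤ w.im) := not_le.mpr hw
      simp [V, this]
    · have h1 : DifferentiableAt ℂ W z := hd.differentiableAt
        ((isOpen_lt continuous_const Complex.continuous_im).mem_nhds h)
      refine h1.congr_of_eventuallyEq ?_
      filter_upwards [(isOpen_lt continuous_const Complex.continuous_im).mem_nhds h] with w hw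
      have : (0 ≤ w.im) := le_of_lt hw
      simp [V, this]
  obtain ⟨p, hp⟩ := entire_polynomial V hVd K m (by
    intro z
    by_cases h : 0 ≤ z.im
    · simpa [V, h] using hK z h
    · have := hK (star z) (by simp at h ⊢; exact h.le)
      simpa [V, h] using this)
  have hWx : ∀ x : ℝ, W x = p.eval (x : ℂ) := fun x => by rw [← hp]; simp [V]
  let P : ℝ[X] := ∑ n ∈ Finset.range (p.natDegree + 1), Polynomial.C ((p.coeff n).re) * X ^ n
  have hPx : ∀ x : ℝ, P.eval x = (W x).re := by
    intro x
    rw [hWx, eval_eq_sum_range (p := p), Complex.re_sum]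
    simp only [P, eval_finsetSum]
    refine Finset.sum_congr rfl fun n _ => ?_
    rw [← Complex.ofReal_pow, Complex.re_mul_ofReal]; simp
  have hPp : P.map (algebraMap ℝ ℂ) = p := by
    refine Polynomial.eq_of_infinite_eval_eq _ _ ?_
    refine (infinite_range_of_injective Complex.ofReal_injective).mono ?_
    rintro _ ⟨x, rfl⟩
    have h1 : (P.map (algebraMap ℝ ℂ)).eval (x : ℂ) = (P.eval x : ℝ) :=
      Polynomial.eval_map_algebraMap P (x : ℂ) |>.trans (by
        have := Polynomial.aeval_algebraMap_apply ℂ x P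
        simpa using this)
    rw [mem_ofPred_eq, h1, hPx, ← hWx]
    exact Complex.ext (by simp) (by simp [hreal x])
  refine ⟨P, fun z hz => ?_⟩
  rw [← Polynomial.eval_map_algebraMap, hPp, ← hp]
  simp [V, hz]

/-! ### Hyperelliptic differentials on the upper half-plane -/

theorem Complex.sqrt_eq_exp_log {z : ℂ} (hz : z ≠ 0) :
    Complex.sqrt z = Complex.exp (Complex.log z / 2) := by
  simp [Complex.sqrt, Complex.cpow_def, hz, div_eq_mul_inv]

theorem Complex.continuousOn_sqrt_upper : ContinuousOn Complex.sqrt {z | 0 ≤ z.im} := by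
  intro z hz
  by_cases h : 0 ≤ z.re ∨ z.im ≠ 0
  · exact (Complex.continuousAt_sqrt h).continuousWithinAt
  · push Not at h
    have hz0 : z ≠ 0 := by rintro rfl; simp at h
    have h1 := Complex.continuousWithinAt_log_of_re_neg_of_im_zero h.1 h.2
    have h2 : ContinuousWithinAt (fun w => Complex.exp (Complex.log w / 2)) {z : ℂ | 0 ≤ z.im} z :=
      (h1.div_const 2).cexp
    refine h2.congr_of_eventuallyEq ?_ (Complex.sqrt_eq_exp_log hz0)
    filter_upwards [nhdsWithin_le_nhds (isOpen_ne.mem_nhds hz0)] with w hw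
      using Complex.sqrt_eq_exp_log hw

theorem Complex.sqrt_sq' (z : ℂ) : Complex.sqrt z ^ 2 = z := by
  simp [Complex.sqrt]

theorem Complex.norm_sqrt_eq (z : ℂ) : ‖Complex.sqrt z‖ = ‖z‖ ^ (1 / 2 : ℝ) := by
  have h : ‖Complex.sqrt z‖ ^ 2 = ‖z‖ := by rw [← norm_pow, Complex.sqrt_sq']
  rw [← h, ← Real.sqrt_eq_rpow, Real.sqrt_sq (norm_nonneg _)]

/-- `∏ √(z - eᵢ)` with the principal branch: the square root of the hyperelliptic polynomial that
is continuous on the closed upper half-plane. -/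
noncomputable def sqp {ι : Type*} [Fintype ι] (e : ι → ℝ) (z : ℂ) : ℂ :=
  ∏ i, Complex.sqrt (z - e i)

/-- The density `p(z)/√D(z)` of a hyperelliptic differential on the closed upper half-plane. -/
noncomputable def vdiff {ι : Type*} [Fintype ι] (e : ι → ℝ) (p : ℝ[X]) (z : ℂ) : ℂ :=
  aeval z p / sqp e z

section
variable {ι : Type*} [Fintype ι] (e : ι → ℝ)

theorem sqp_continuousOn : ContinuousOn (sqp e) {z | 0 ≤ z.im} := by
  refine continuousOn_finsetProd _ fun i _ => ?_
  refine Complex.continuousOn_sqrt_upper.comp (by fun_prop) ?_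
  intro z hz
  simpa using hz

theorem sqp_ne_zero {z : ℂ} (hz : ∀ i, z ≠ e i) : sqp e z ≠ 0 := by
  refine Finset.prod_ne_zero_iff.mpr fun i _ h => ?_
  have := Complex.sqrt_sq' (z - e i)
  rw [h] at this
  exact hz i (by linear_combination -this)

theorem ne_of_im_pos {ι : Type*} (e : ι → ℝ) {z : ℂ} (hz : 0 < z.im) (i : ι) : z ≠ e i := by
  intro h; rw [h] at hz; simp at hz

theorem sqp_differentiableOn : DifferentiableOn ℂ (sqp e) {z | 0 < z.im} := by
  have : sqp e = fun z => ∏ i, Complex.sqrt (z - e i) := rfl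
  rw [this]
  refine DifferentiableOn.fun_finsetProd fun i _ => ?_
  refine Complex.differentiableOn_sqrt.comp (by fun_prop) ?_
  intro z hz
  refine Or.inr ?_
  have : 0 < z.im := hz
  simpa using this.ne'

theorem sqp_sq (z : ℂ) : sqp e z ^ 2 = ∏ i, (z - e i) := by
  simp only [sqp, ← Finset.prod_pow, Complex.sqrt_sq']

theorem norm_vdiff (p : ℝ[X]) (z : ℂ) :
    ‖vdiff e p z‖ = ‖aeval z p‖ * ∏ i, ‖z - e i‖ ^ (-(1 / 2) : ℝ) := by
  rw [vdiff, norm_div, div_eq_mul_inv, sqp, norm_prod, ← Finset.prod_inv_distrib]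
  congr 1
  refine Finset.prod_congr rfl fun i _ => ?_
  rw [Complex.norm_sqrt_eq, Real.rpow_neg (norm_nonneg _)]

theorem vdiff_differentiableOn (p : ℝ[X]) : DifferentiableOn ℂ (vdiff e p) {z | 0 < z.im} := by
  refine DifferentiableOn.div ?_ (sqp_differentiableOn e)
    fun z hz => sqp_ne_zero e (ne_of_im_pos e hz)
  exact p.differentiable_aeval.differentiableOn

theorem vdiff_continuousWithinAt (p : ℝ[X]) {z : ℂ} (hz : 0 ≤ z.im) (hz' : ∀ i, z ≠ e i) :
    ContinuousWithinAt (vdiff e p) {z | 0 ≤ z.im} z := by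
  refine ContinuousWithinAt.div ?_ (sqp_continuousOn e z hz) (sqp_ne_zero e hz')
  exact p.differentiable_aeval.continuous.continuousWithinAt

theorem norm_aeval_le (p : ℝ[X]) (d : ℕ) (hd : p.natDegree ≤ d) :
    ∃ K : ℝ, 0 ≤ K ∧ ∀ z : ℂ, ‖aeval z p‖ ≤ K * (1 + ‖z‖) ^ d := by
  refine ⟨∑ n ∈ Finset.range (p.natDegree + 1), |p.coeff n|,
    Finset.sum_nonneg fun _ _ => abs_nonneg _, fun z => ?_⟩
  rw [aeval_eq_sum_range, Finset.sum_mul]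
  refine (norm_sum_le _ _).trans (Finset.sum_le_sum fun n hn => ?_)
  rw [norm_smul, Real.norm_eq_abs, norm_pow]
  have h1 : ‖z‖ ^ n ≤ (1 + ‖z‖) ^ n := by gcongr; linarith
  have h2 : (1 + ‖z‖) ^ n ≤ (1 + ‖z‖) ^ d :=
    pow_le_pow_right₀ (by linarith [norm_nonneg z]) (by
      have := Finset.mem_range.mp hn; omega)
  gcongr
  exact h1.trans h2

/-- The inverse square root of a product is controlled by the singularity at the nearest zero; away
from that zero each factor is comparable to `1 + ‖z‖`. -/
theorem prod_rpow_le (he : Function.Injective e) [Nonempty ι] :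
    ∃ K : ℝ, 0 ≤ K ∧ ∀ z : ℂ, ∏ i, ‖z - e i‖ ^ (-(1 / 2) : ℝ) ≤
      K * (∑ i, ‖z - e i‖ ^ (-(1 / 2) : ℝ)) * (1 + ‖z‖) ^ (1 / 2 - Fintype.card ι / 2 : ℝ) := by
  classical
  obtain ⟨δ, hδ, hsep⟩ : ∃ δ : ℝ, 0 < δ ∧ ∀ i j, i ≠ j → δ ≤ |e i - e j| := by
    obtain ⟨q, hq⟩ := Finite.exists_min fun q : ι × ι => if q.1 = q.2 then 1 else |e q.1 - e q.2|
    refine ⟨_, ?_, fun i j hij => (hq (i, j)).trans_eq (if_neg hij)⟩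
    split_ifs with h
    · exact one_pos
    · exact abs_pos.mpr (sub_ne_zero.mpr fun h' => h (he h'))
  obtain ⟨M, hM⟩ : ∃ M : ℝ, ∀ i, |e i| ≤ M := by
    obtain ⟨M, hM⟩ := (Set.finite_range fun i => |e i|).bddAbove
    exact ⟨M, fun i => hM ⟨i, rfl⟩⟩
  have hM0 : 0 ≤ M := (abs_nonneg _).trans (hM (Classical.arbitrary ι))
  let L : ℝ := (1 + M) * (2 / δ) + 1
  have hL : 0 < L := by positivity
  have hLc : ∀ (z : ℂ) (i : ι), δ / 2 ≤ ‖z - e i‖ → 1 + ‖z‖ ≤ L * ‖z - e i‖ := by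
    intro z i h
    have h1 : ‖z‖ ≤ ‖z - e i‖ + M := by
      have := norm_add_le (z - e i) (e i)
      rw [sub_add_cancel, Complex.norm_real, Real.norm_eq_abs] at this
      linarith [hM i]
    have h2 : 1 ≤ 2 / δ * ‖z - e i‖ := by
      have : 2 / δ * (δ / 2) ≤ 2 / δ * ‖z - e i‖ := by gcongr
      rwa [show 2 / δ * (δ / 2) = 1 by field_simp] at this
    have h3 : (1 + M) * 1 ≤ (1 + M) * (2 / δ * ‖z - e i‖) := by gcongr
    have : L * ‖z - e i‖ = (1 + M) * (2 / δ * ‖z - e i‖) + ‖z - e i‖ := by simp only [L]; ring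
    rw [this]
    linarith
  refine ⟨(L ^ (1 / 2 : ℝ)) ^ (Fintype.card ι - 1), by positivity, fun z => ?_⟩
  obtain ⟨i₀, hi₀⟩ := Finite.exists_min fun i => ‖z - e i‖
  have hfar : ∀ i ∈ Finset.univ.erase i₀, ‖z - e i‖ ^ (-(1 / 2) : ℝ) ≤
      L ^ (1 / 2 : ℝ) * (1 + ‖z‖) ^ (-(1 / 2) : ℝ) := by
    intro i hi
    have hne := Finset.ne_of_mem_erase hi
    have h1 : δ / 2 ≤ ‖z - e i‖ := by
      have h2 := hsep i i₀ hne
      have h3 : |e i - e i₀| ≤ ‖z - e i‖ + ‖z - e i₀‖ := by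
        have := norm_sub_le (z - e i₀) (z - e i)
        rw [sub_sub_sub_cancel_left, ← Complex.ofReal_sub, Complex.norm_real,
          Real.norm_eq_abs] at this
        linarith
      linarith [hi₀ i]
    have h2 := hLc z i h1
    have h3 : 0 < ‖z - e i‖ := by linarith
    have h4 : 0 < 1 + ‖z‖ := by positivity
    have h5 : (1 + ‖z‖) / L ≤ ‖z - e i‖ := by rwa [div_le_iff₀' hL]
    refine (Real.rpow_le_rpow_of_nonpos (by positivity) h5 (by norm_num)).trans (le_of_eq ?_)
    rw [Real.div_rpow h4.le hL.le, Real.rpow_neg hL.le, div_inv_eq_mul, mul_comm]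
  rw [← Finset.mul_prod_erase _ _ (Finset.mem_univ i₀)]
  have h1 : ∏ i ∈ Finset.univ.erase i₀, ‖z - e i‖ ^ (-(1 / 2) : ℝ) ≤
      (L ^ (1 / 2 : ℝ) * (1 + ‖z‖) ^ (-(1 / 2) : ℝ)) ^ (Fintype.card ι - 1) := by
    refine (Finset.prod_le_prod (fun i _ => by positivity) hfar).trans ?_
    rw [Finset.prod_const, Finset.card_erase_of_mem (Finset.mem_univ _), Finset.card_univ]
  have h2 : ‖z - e i₀‖ ^ (-(1 / 2) : ℝ) ≤ ∑ i, ‖z - e i‖ ^ (-(1 / 2) : ℝ) :=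
    Finset.single_le_sum (f := fun i => ‖z - e i‖ ^ (-(1 / 2) : ℝ))
      (fun i _ => by positivity) (Finset.mem_univ i₀)
  have hcard : 1 ≤ Fintype.card ι := Fintype.card_pos
  have h3 : (1 + ‖z‖) ^ (1 / 2 - Fintype.card ι / 2 : ℝ)
      = ((1 + ‖z‖) ^ (-(1 / 2) : ℝ)) ^ (Fintype.card ι - 1) := by
    rw [← Real.rpow_natCast, ← Real.rpow_mul (by positivity)]
    congr 1
    push_cast [hcard]; ring
  rw [h3]
  calc _ ≤ (∑ i, ‖z - e i‖ ^ (-(1 / 2) : ℝ)) *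
        (L ^ (1 / 2 : ℝ) * (1 + ‖z‖) ^ (-(1 / 2) : ℝ)) ^ (Fintype.card ι - 1) := by gcongr
    _ = _ := by rw [mul_pow]; ring

theorem norm_vdiff_le (he : Function.Injective e) [Nonempty ι] (p : ℝ[X]) (d : ℕ)
    (hd : p.natDegree ≤ d) :
    ∃ K : ℝ, 0 ≤ K ∧ ∀ z : ℂ, ‖vdiff e p z‖ ≤
      K * (∑ i, ‖z - e i‖ ^ (-(1 / 2) : ℝ)) * (1 + ‖z‖) ^ (d + 1 / 2 - Fintype.card ι / 2 : ℝ) := by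
  obtain ⟨K₁, h1, hK₁⟩ := norm_aeval_le p d hd
  obtain ⟨K₂, h2, hK₂⟩ := prod_rpow_le e he
  refine ⟨K₁ * K₂, by positivity, fun z => ?_⟩
  rw [norm_vdiff]
  have hpos : 0 < 1 + ‖z‖ := by positivity
  calc _ ≤ (K₁ * (1 + ‖z‖) ^ d) * (K₂ * (∑ i, ‖z - e i‖ ^ (-(1 / 2) : ℝ)) *
        (1 + ‖z‖) ^ (1 / 2 - Fintype.card ι / 2 : ℝ)) :=
        mul_le_mul (hK₁ z) (hK₂ z) (Finset.prod_nonneg fun i _ => by positivity) (by positivity)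
    _ = _ := by
      rw [show (d + 1 / 2 - Fintype.card ι / 2 : ℝ) = d + (1 / 2 - Fintype.card ι / 2) by ring,
        Real.rpow_add hpos, Real.rpow_natCast]
      ring

end

theorem locallyIntegrable_abs_sub_rpow (c : ℝ) :
    LocallyIntegrable (fun x : ℝ => |x - c| ^ (-(1 / 2) : ℝ)) := by
  have h0 : LocallyIntegrable (fun x : ℝ => |x| ^ (-(1 / 2) : ℝ)) := by
    refine locallyIntegrable_of_norm_le_rpow (C := 1) (α := 1 / 2) (by simp) (by simp; norm_num)
      ?_ ?_
    · refine Filter.Eventually.of_forall fun x => ?_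
      rw [one_mul, Real.norm_eq_abs, Real.norm_eq_abs, abs_of_nonneg (by positivity)]
    · exact Measurable.aestronglyMeasurable (by fun_prop)
  have h1 := (locallyIntegrable_map_homeomorph (μ := volume) (Homeomorph.subRight c)
    (f := fun x : ℝ => |x| ^ (-(1 / 2) : ℝ))).mp (by
      have : Measure.map (⇑(Homeomorph.subRight c)) volume = (volume : Measure ℝ) :=
        (measurePreserving_sub_right volume c).map_eq
      rw [this]; exact h0)
  exact h1

section
variable {ι : Type*} [Fintype ι] (e : ι → ℝ)

/-- The sum of the inverse square root singularities at the branch points. -/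
noncomputable def sing (z : ℂ) : ℝ := ∑ i, ‖z - e i‖ ^ (-(1 / 2) : ℝ)

theorem sing_nonneg (z : ℂ) : 0 ≤ sing e z := Finset.sum_nonneg fun i _ => by positivity

theorem sing_ofReal (x : ℝ) : sing e x = ∑ i, |x - e i| ^ (-(1 / 2) : ℝ) := by
  refine Finset.sum_congr rfl fun i _ => ?_
  rw [← Complex.ofReal_sub, Complex.norm_real, Real.norm_eq_abs]

theorem locallyIntegrable_sing : LocallyIntegrable (fun x : ℝ => sing e x) := by
  simp only [sing_ofReal]
  exact locallyIntegrable_finsetSum _ fun i _ => locallyIntegrable_abs_sub_rpow (e i)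

theorem sing_le_im (z : ℂ) (hz : 0 < z.im) :
    sing e z ≤ Fintype.card ι * z.im ^ (-(1 / 2) : ℝ) := by
  refine (Finset.sum_le_card_nsmul _ _ (z.im ^ (-(1 / 2) : ℝ)) fun i _ => ?_).trans_eq (by simp)
  refine Real.rpow_le_rpow_of_nonpos hz ?_ (by norm_num)
  have := Complex.abs_im_le_norm (z - e i)
  simp only [Complex.sub_im, Complex.ofReal_im, sub_zero] at this
  exact (le_abs_self _).trans this

theorem ae_notMem_range : ∀ᵐ x : ℝ, ∀ i, x ≠ e i := by
  have := (Set.finite_range e).measure_zero volume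
  filter_upwards [compl_mem_ae_iff.mpr this] with x hx i h using hx ⟨i, h.symm⟩

theorem sing_le_re (x y : ℝ) (hx : ∀ i, x ≠ e i) : sing e (x + y * Complex.I) ≤ sing e x := by
  rw [sing_ofReal]
  refine Finset.sum_le_sum fun i _ => ?_
  refine Real.rpow_le_rpow_of_nonpos (abs_pos.mpr (sub_ne_zero.mpr (hx i))) ?_ (by norm_num)
  have := Complex.abs_re_le_norm (x + y * Complex.I - e i)
  simpa using this

open Filter Topology in
theorem vdiff_tendsto (p : ℝ[X]) {x : ℝ} (hx : ∀ i, x ≠ e i) :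
    Tendsto (fun y : ℝ => vdiff e p (x + y * Complex.I)) (𝓝[>] 0) (𝓝 (vdiff e p x)) := by
  have h2 : Tendsto (fun y : ℝ => (x : ℂ) + y * Complex.I) (𝓝[>] 0)
      (𝓝[{z | 0 ≤ z.im}] (x : ℂ)) := by
    refine tendsto_nhdsWithin_iff.mpr ⟨?_, ?_⟩
    · have : Continuous fun y : ℝ => (x : ℂ) + y * Complex.I := by fun_prop
      have h3 := this.tendsto 0
      simp only [Complex.ofReal_zero, zero_mul, add_zero] at h3
      exact h3.mono_left nhdsWithin_le_nhds
    · filter_upwards [self_mem_nhdsWithin] with y hy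
      have : 0 < y := hy
      simpa using this.le
  exact (vdiff_continuousWithinAt e p (by simp) fun i => by exact_mod_cast hx i).tendsto.comp h2

open Filter Topology in
/-- The indefinite integral of `p dz/√D` on the closed upper half-plane; all branch points are
integrable singularities because they are simple zeros of `D`. -/
theorem vdiff_primitive (he : Function.Injective e) [Nonempty ι] (p : ℝ[X]) :
    ∃ Θ : ℂ → ℂ, ContinuousOn Θ {z | 0 ≤ z.im} ∧
      (∀ z : ℂ, 0 < z.im → HasDerivAt Θ (vdiff e p z) z) ∧
      ∀ x x' : ℝ, Θ x' - Θ x = ∫ t in x..x', vdiff e p t := by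
  obtain ⟨K, hK0, hK⟩ := norm_vdiff_le e he p p.natDegree le_rfl
  set s : ℝ := p.natDegree + 1 / 2 - Fintype.card ι / 2
  have hloc : ∀ R : ℝ, ∃ L : ℝ, 0 ≤ L ∧ ∀ z : ℂ, ‖z‖ ≤ R → ‖vdiff e p z‖ ≤ L * sing e z := by
    intro R
    refine ⟨K * (1 + |R|) ^ |s|, by positivity, fun z hz => (hK z).trans ?_⟩
    have h1 : (1 + ‖z‖) ^ s ≤ (1 + |R|) ^ |s| := by
      refine (Real.rpow_le_rpow_of_exponent_le (by linarith [norm_nonneg z]) (le_abs_self s)).trans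
        ?_
      refine Real.rpow_le_rpow (by positivity) ?_ (abs_nonneg _)
      linarith [le_abs_self R]
    calc _ = K * (1 + ‖z‖) ^ s * sing e z := by rw [sing]; ring
      _ ≤ _ := by gcongr; exact sing_nonneg e z
  refine exists_closed_primitive _ (vdiff_differentiableOn e p) ?_ ?_ ?_
  · intro R
    obtain ⟨L, hL0, hL⟩ := hloc R
    refine ⟨L * Fintype.card ι, fun z hz hzR => (hL z hzR).trans ?_⟩
    rw [mul_assoc]
    gcongr
    exact sing_le_im e z hz
  · intro R
    obtain ⟨L, hL0, hL⟩ := hloc (R + 1)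
    refine ⟨fun x => L * sing e x, ?_, ?_⟩
    · exact (locallyIntegrable_sing e).smul L
    · filter_upwards [ae_notMem_range e] with x hx y hxR hy hy1
      refine (hL _ ?_).trans (mul_le_mul_of_nonneg_left (sing_le_re e x y hx) hL0)
      refine (norm_add_le _ _).trans ?_
      rw [norm_mul, Complex.norm_I, mul_one, Complex.norm_real, Complex.norm_real,
        Real.norm_eq_abs, Real.norm_eq_abs, abs_of_pos hy]
      linarith
  · filter_upwards [ae_notMem_range e] with x hx using vdiff_tendsto e p hx

end

/-! ### Behaviour at infinity -/

open Filter Topology in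
theorem tendsto_vert (x : ℝ) : Tendsto (fun y : ℝ => (x : ℂ) + y * Complex.I) (𝓝[>] 0)
    (𝓝[{z | 0 ≤ z.im}] (x : ℂ)) := by
  refine tendsto_nhdsWithin_iff.mpr ⟨?_, ?_⟩
  · have : Continuous fun y : ℝ => (x : ℂ) + y * Complex.I := by fun_prop
    have h3 := this.tendsto 0
    simp only [Complex.ofReal_zero, zero_mul, add_zero] at h3
    exact h3.mono_left nhdsWithin_le_nhds
  · filter_upwards [self_mem_nhdsWithin] with y hy
    have : 0 < y := hy
    simpa using this.le

theorem Complex.sqrt_re_nonneg (z : ℂ) : 0 ≤ (Complex.sqrt z).re := by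
  rw [Complex.sqrt_eq_real_add_ite]
  split_ifs <;> simp <;> positivity

theorem Complex.sqrt_im_nonneg {z : ℂ} (hz : 0 ≤ z.im) : 0 ≤ (Complex.sqrt z).im := by
  rw [Complex.sqrt_eq_real_add_ite, if_pos hz]
  simp
  positivity

/-- Both roots lie in the closed first quadrant, so their quotient has nonnegative real part and is
the root of `1 - c / z` near `1`. -/
theorem norm_sqrt_div_sub_one (c : ℝ) {z : ℂ} (hz : 0 ≤ z.im) (hz0 : z ≠ 0) :
    ‖Complex.sqrt (z - c) / Complex.sqrt z - 1‖ ≤ |c| / ‖z‖ := by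
  set q := Complex.sqrt (z - c) / Complex.sqrt z with hq
  have hq2 : q ^ 2 = 1 - c / z := by
    rw [hq, div_pow, Complex.sqrt_sq', Complex.sqrt_sq', sub_div, div_self hz0]
  have hre : 0 ≤ q.re := by
    rw [hq, Complex.div_re]
    have h1 := Complex.sqrt_re_nonneg z
    have h2 := Complex.sqrt_im_nonneg hz
    have h3 := Complex.sqrt_re_nonneg (z - c)
    have h4 : 0 ≤ (Complex.sqrt (z - c)).im := Complex.sqrt_im_nonneg (by simpa using hz)
    have h5 := Complex.normSq_nonneg (Complex.sqrt z)
    positivity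
  have h1 : 1 ≤ ‖q + 1‖ := by
    refine le_trans ?_ ((le_abs_self _).trans (Complex.abs_re_le_norm (q + 1)))
    simpa using hre
  have h2 : ‖q - 1‖ * ‖q + 1‖ = |c| / ‖z‖ := by
    rw [← norm_mul, show (q - 1) * (q + 1) = -(c / z) by linear_combination hq2, norm_neg,
      norm_div, Complex.norm_real, Real.norm_eq_abs]
  rw [← h2]
  exact le_mul_of_one_le_right (norm_nonneg _) h1

section
variable {ι : Type*} [Fintype ι] (e : ι → ℝ)

open Filter Topology in
/-- `r dz/√D` is asymptotic to `dz/z` at infinity when `r` is monic and `deg D = 2 deg r + 2`. -/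
theorem vdiff_asymp (g : ℕ) (hcard : Fintype.card ι = 2 * (g + 1)) (r : ℝ[X]) (hr : r.Monic)
    (hrg : r.natDegree = g) (η : ℝ) (hη : 0 < η) :
    ∃ T : ℝ, 0 < T ∧ ∀ z : ℂ, 0 ≤ z.im → T ≤ ‖z‖ → ‖z * vdiff e r z - 1‖ ≤ η := by
  let l : Filter ℂ := Bornology.cobounded ℂ ⊓ 𝓟 {z | 0 ≤ z.im}
  have hlim : Tendsto (fun z => z * vdiff e r z) l (𝓝 1) := by
    have hinv : Tendsto (fun z : ℂ => z⁻¹) l (𝓝 0) :=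
      (tendsto_inv₀_cobounded (α := ℂ)).mono_left inf_le_left
    have hne : ∀ᶠ z in l, z ≠ 0 := by
      have : ∀ᶠ z : ℂ in Bornology.cobounded ℂ, z ≠ 0 := by
        have := (tendsto_norm_cobounded_atTop (E := ℂ)).eventually_gt_atTop 0
        filter_upwards [this] with z hz using norm_pos_iff.mp hz
      exact this.filter_mono inf_le_left
    have him : ∀ᶠ z in l, 0 ≤ z.im := mem_inf_of_right (mem_principal_self _)
    have h1 : ∀ i, Tendsto (fun z => Complex.sqrt (z - e i) / Complex.sqrt z) l (𝓝 1) := by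
      intro i
      rw [tendsto_iff_norm_sub_tendsto_zero]
      refine squeeze_zero' (g := fun z => |e i| * ‖z⁻¹‖)
        (Eventually.of_forall fun z => norm_nonneg _) ?_ ?_
      · filter_upwards [hne, him] with z hz hz'
        rw [norm_inv, ← div_eq_mul_inv]
        exact norm_sqrt_div_sub_one _ hz' hz
      · simpa using hinv.norm.const_mul |e i|
    have h2 : Tendsto (fun z => ∏ i, (Complex.sqrt (z - e i) / Complex.sqrt z)) l (𝓝 1) := by
      simpa using tendsto_finsetProd Finset.univ fun i _ => h1 i
    have h3 : Tendsto (fun z : ℂ => aeval z⁻¹ r.reverse) l (𝓝 1) := by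
      have h4 : Tendsto (fun w : ℂ => aeval w r.reverse) (𝓝 0) (𝓝 (aeval 0 r.reverse)) :=
        (r.reverse.differentiable_aeval (𝕜 := ℂ)).continuous.tendsto 0
      have h5 : aeval (0 : ℂ) r.reverse = 1 := by
        rw [← coeff_zero_eq_aeval_zero', coeff_zero_reverse, hr.leadingCoeff, map_one]
      rw [h5] at h4
      exact h4.comp hinv
    have h4 := h3.div h2 one_ne_zero
    rw [div_one] at h4
    refine h4.congr' ?_
    filter_upwards [hne] with z hz
    have h5 : aeval z r = aeval z⁻¹ r.reverse * z ^ g := by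
      let _ := invertibleOfNonzero hz
      have := Polynomial.eval₂_reverse_mul_pow (algebraMap ℝ ℂ) z r
      rw [hrg, invOf_eq_inv] at this
      exact this.symm
    have hs : Complex.sqrt z ^ (Fintype.card ι) = z ^ (g + 1) := by
      rw [hcard, pow_mul, Complex.sqrt_sq']
    rw [Pi.div_apply, Finset.prod_div_distrib, Finset.prod_const, Finset.card_univ, hs, vdiff, h5, sqp]
    rw [div_div_eq_mul_div, pow_succ]
    ring
  have h1 : ∀ᶠ z in l, ‖z * vdiff e r z - 1‖ ≤ η := by
    have := (tendsto_iff_norm_sub_tendsto_zero.mp hlim).eventually_lt_const hη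
    exact this.mono fun z hz => hz.le
  rw [eventually_inf_principal] at h1
  obtain ⟨T, -, hT⟩ := (hasBasis_cobounded_norm (E := ℂ)).eventually_iff.mp h1
  exact ⟨|T| + 1, by positivity, fun z hz hzT => hT (by
    have : T ≤ ‖z‖ := by linarith [le_abs_self T]
    exact this) hz⟩

open Filter Topology in
/-- The primitive of `r dz/√D` grows logarithmically, so its exponentials grow polynomially. -/
theorem theta_growth (g : ℕ) (hcard : Fintype.card ι = 2 * (g + 1)) (r : ℝ[X]) (hr : r.Monic)
    (hrg : r.natDegree = g) (Θ : ℂ → ℂ) (hc : ContinuousOn Θ {z | 0 ≤ z.im})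
    (hd : ∀ z : ℂ, 0 < z.im → HasDerivAt Θ (vdiff e r z) z) :
    ∃ A : ℝ, 0 ≤ A ∧ ∀ z : ℂ, 0 ≤ z.im → ‖Θ z‖ ≤ A + 2 * Real.log (1 + ‖z‖) := by
  obtain ⟨T₀, hT₀, hT⟩ := vdiff_asymp e g hcard r hr hrg 1 one_pos
  set T := max T₀ 1 with hTd
  have hT1 : 1 ≤ T := le_max_right _ _
  have hKc : IsCompact (Metric.closedBall (0 : ℂ) T ∩ {z | 0 ≤ z.im}) :=
    (isCompact_closedBall _ _).inter_right (isClosed_le continuous_const Complex.continuous_im)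
  obtain ⟨A, hA⟩ := hKc.exists_bound_of_continuousOn (hc.mono inter_subset_right)
  have hlog : ∀ z : ℂ, 0 ≤ Real.log (1 + ‖z‖) :=
    fun z => Real.log_nonneg (by linarith [norm_nonneg z])
  have hA0 : 0 ≤ A := (norm_nonneg _).trans (hA 0 ⟨by simp; linarith, by simp⟩)
  have hupper : ∀ z : ℂ, 0 < z.im → ‖Θ z‖ ≤ A + 2 * Real.log (1 + ‖z‖) := by
    intro z hz
    rcases le_total ‖z‖ T with hzT | hzT
    · have := hA z ⟨by simpa using hzT, hz.le⟩
      linarith [hlog z]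
    · have hzpos : 0 < ‖z‖ := by linarith
      set u : ℂ := z / ‖z‖ with hu
      have hun : ‖u‖ = 1 := by
        rw [hu, norm_div, Complex.norm_real, norm_norm, div_self hzpos.ne']
      have huim : 0 < u.im := by
        rw [hu, Complex.div_ofReal_im]; positivity
      have hpath : ∀ s : ℝ, 0 < s → HasDerivAt (fun s : ℝ => Θ (s * u)) (vdiff e r (s * u) * u) s := by
        intro s hs
        have h2 := hd (s * u) (by rw [Complex.im_ofReal_mul]; positivity)
        have h3 : HasDerivAt (fun s : ℝ => (s : ℂ) * u) u s := by
          simpa using (Complex.ofRealCLM.hasDerivAt (x := s)).mul_const u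
        exact h2.comp s h3
      have hder : ∀ s : ℝ, T ≤ s → ‖vdiff e r (s * u) * u‖ ≤ 2 * s⁻¹ := by
        intro s hs
        have hs0 : 0 < s := by linarith
        have hn : ‖(s : ℂ) * u‖ = s := by
          rw [norm_mul, hun, mul_one, Complex.norm_real, Real.norm_of_nonneg hs0.le]
        have h1 := hT (s * u) (by rw [Complex.im_ofReal_mul]; positivity) (by
          rw [hn]; exact (le_max_left _ _).trans hs)
        have h2 : ‖(s : ℂ) * u * vdiff e r (s * u)‖ ≤ 2 := by
          have := norm_add_le ((s : ℂ) * u * vdiff e r (s * u) - 1) 1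
          rw [sub_add_cancel, norm_one] at this
          linarith
        rw [norm_mul, hn] at h2
        rw [norm_mul, hun, mul_one, ← div_eq_mul_inv, le_div_iff₀ hs0]
        linarith
      have hcmp := image_norm_le_of_norm_deriv_right_le_deriv_boundary'
        (a := T) (b := ‖z‖) (f := fun s : ℝ => Θ (s * u) - Θ (T * u))
        (f' := fun s : ℝ => vdiff e r (s * u) * u)
        (B := fun s => 2 * (Real.log s - Real.log T)) (B' := fun s => 2 * s⁻¹)
        (fun s hs => ((hpath s (by linarith [hs.1])).sub_const _).continuousAt.continuousWithinAt)
        (fun s hs => ((hpath s (by linarith [hs.1])).sub_const _).hasDerivWithinAt)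
        (by simp)
        (fun s hs => (((Real.continuousAt_log (by linarith [hs.1])).sub
          continuousAt_const).const_mul 2).continuousWithinAt)
        (fun s hs => (((Real.hasDerivAt_log (by linarith [hs.1])).sub_const _).const_mul
          2).hasDerivWithinAt)
        (fun s hs => hder s hs.1) (right_mem_Icc.mpr hzT)
      have hzu : (‖z‖ : ℂ) * u = z := by
        rw [hu, mul_div_cancel₀]
        exact_mod_cast hzpos.ne'
      rw [hzu] at hcmp
      have h1 := hA (T * u) ⟨by
        rw [mem_closedBall_zero_iff, norm_mul, hun, mul_one, Complex.norm_real,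
          Real.norm_of_nonneg (by linarith)], by
        show 0 ≤ ((T : ℂ) * u).im
        rw [Complex.im_ofReal_mul]; positivity⟩
      have h2 : ‖Θ z‖ ≤ ‖Θ z - Θ (T * u)‖ + ‖Θ (T * u)‖ := by
        simpa using norm_add_le (Θ z - Θ (T * u)) (Θ (T * u))
      have h3 : Real.log ‖z‖ ≤ Real.log (1 + ‖z‖) := Real.log_le_log hzpos (by linarith)
      have h4 : 0 ≤ Real.log T := Real.log_nonneg hT1
      linarith
  refine ⟨A, hA0, fun z hz => ?_⟩
  rcases hz.lt_or_eq with h | h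
  · exact hupper z h
  · have hzx : z = (z.re : ℂ) := Complex.ext (by simp) (by simp [← h])
    have hcw : ContinuousWithinAt Θ {z | 0 ≤ z.im} (z.re : ℂ) := hc _ (by simp)
    have h1 := (hcw.tendsto.comp (tendsto_vert z.re)).norm
    have h2 : Tendsto (fun y : ℝ => A + 2 * Real.log (1 + ‖(z.re : ℂ) + y * Complex.I‖)) (𝓝[>] 0)
        (𝓝 (A + 2 * Real.log (1 + ‖(z.re : ℂ)‖))) := by
      have h3 : ContinuousAt (fun w : ℂ => A + 2 * Real.log (1 + ‖w‖)) (z.re : ℂ) := by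
        refine continuousAt_const.add (ContinuousAt.const_mul ?_ 2)
        exact ContinuousAt.log (by fun_prop) (by positivity)
      exact h3.tendsto.comp ((tendsto_vert z.re).mono_right nhdsWithin_le_nhds)
    rw [hzx]
    refine le_of_tendsto_of_tendsto h1 h2 ?_
    filter_upwards [self_mem_nhdsWithin] with y hy
    exact hupper _ (by simpa using hy)

open Filter Topology in
/-- The residue of `r dz/√D` at infinity: half a turn around a large circle changes `Im Θ` by
almost exactly `π`. -/
theorem theta_halfturn (g : ℕ) (hcard : Fintype.card ι = 2 * (g + 1)) (r : ℝ[X]) (hr : r.Monic)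
    (hrg : r.natDegree = g) (Θ : ℂ → ℂ) (hc : ContinuousOn Θ {z | 0 ≤ z.im})
    (hd : ∀ z : ℂ, 0 < z.im → HasDerivAt Θ (vdiff e r z) z) (η : ℝ) (hη : 0 < η) :
    ∃ T : ℝ, 0 < T ∧ ∀ t : ℝ, T ≤ t →
      |(Θ ((-t : ℝ) : ℂ)).im - (Θ (t : ℂ)).im - Real.pi| ≤ Real.pi * η := by
  obtain ⟨T, hT0, hT⟩ := vdiff_asymp e g hcard r hr hrg η hη
  refine ⟨T, hT0, fun t ht => ?_⟩
  have ht0 : 0 < t := by linarith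
  let γ : ℝ → ℂ := fun φ => t * Complex.exp (φ * Complex.I)
  have hγc : Continuous γ := by fun_prop
  have hγim : ∀ φ, (γ φ).im = t * Real.sin φ := by
    intro φ
    simp only [γ]
    rw [Complex.im_ofReal_mul, Complex.exp_ofReal_mul_I_im]
  have hγn : ∀ φ, ‖γ φ‖ = t := by
    intro φ
    simp only [γ]
    rw [norm_mul, Complex.norm_exp_ofReal_mul_I, mul_one, Complex.norm_real,
      Real.norm_of_nonneg ht0.le]
  have hγd : ∀ φ : ℝ, HasDerivAt γ (γ φ * Complex.I) φ := by
    intro φ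
    have h1 : HasDerivAt (fun φ : ℝ => (φ : ℂ) * Complex.I) Complex.I φ := by
      simpa using (Complex.ofRealCLM.hasDerivAt (x := φ)).mul_const Complex.I
    have := (h1.cexp).const_mul (t : ℂ)
    refine this.congr_deriv ?_
    simp only [γ]; ring
  have hder : ∀ φ ∈ Ioo 0 Real.pi, HasDerivAt (fun φ : ℝ => (Θ (γ φ)).im - φ)
      ((γ φ * vdiff e r (γ φ) - 1).re) φ := by
    intro φ hφ
    have h1 : 0 < (γ φ).im := by
      rw [hγim]; exact mul_pos ht0 (Real.sin_pos_of_pos_of_lt_pi hφ.1 hφ.2)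
    have h2 : HasDerivAt (fun φ : ℝ => Θ (γ φ)) (vdiff e r (γ φ) * (γ φ * Complex.I)) φ :=
      (hd _ h1).comp φ (hγd φ)
    have h3 := (Complex.imCLM.hasFDerivAt.comp_hasDerivAt φ h2).sub (hasDerivAt_id φ)
    refine h3.congr_deriv ?_
    simp
    ring
  have hcont : ContinuousOn (fun φ : ℝ => (Θ (γ φ)).im - φ) (Icc 0 Real.pi) := by
    refine ContinuousOn.sub ?_ continuousOn_id
    refine Complex.continuous_im.comp_continuousOn (hc.comp hγc.continuousOn ?_)
    intro φ hφ
    show 0 ≤ (γ φ).im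
    rw [hγim]; exact mul_nonneg ht0.le (Real.sin_nonneg_of_nonneg_of_le_pi hφ.1 hφ.2)
  obtain ⟨φ, hφ, hslope⟩ := exists_hasDerivAt_eq_slope _ _ Real.pi_pos hcont hder
  have hb : |(γ φ * vdiff e r (γ φ) - 1).re| ≤ η := by
    refine (Complex.abs_re_le_norm _).trans (hT _ ?_ (by rw [hγn]; exact ht))
    rw [hγim]; exact mul_nonneg ht0.le (Real.sin_nonneg_of_nonneg_of_le_pi hφ.1.le hφ.2.le)
  have hpi := Real.pi_pos
  have h0 : γ 0 = (t : ℂ) := by simp [γ]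
  have h1 : γ Real.pi = ((-t : ℝ) : ℂ) := by simp [γ]
  rw [hslope, abs_div, sub_zero, sub_zero, abs_of_pos hpi, div_le_iff₀ hpi, h0, h1] at hb
  calc _ = |(Θ ((-t : ℝ) : ℂ)).im - Real.pi - (Θ (t : ℂ)).im| := by congr 1; ring
    _ ≤ _ := by rw [mul_comm]; exact hb

end

/-! ### Band configurations -/

/-- The configurations `a₀ < b₀ < a₁ < ⋯ < a_g < b_g` of bands `[aⱼ, bⱼ]`. -/
structure Bands {g : ℕ} (a b : Fin (g + 1) → ℝ) : Prop where
  lt : ∀ j, a j < b j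
  gap : ∀ j k, j < k → b j < a k

/-- All branch points, as one family. -/
def ep {g : ℕ} (a b : Fin (g + 1) → ℝ) : Fin (g + 1) ⊕ Fin (g + 1) → ℝ := Sum.elim a b

/-- The weight `√|D(x)|` on the real line. -/
noncomputable def wt {g : ℕ} (a b : Fin (g + 1) → ℝ) (x : ℝ) : ℝ :=
  ∏ j, √(|x - a j| * |x - b j|)

/-- The sign `(-1)^{g-k}`, written as a product over the bands to the right of band `k`. -/
def sg {g : ℕ} (k : Fin (g + 1)) : ℝ := ∏ j : Fin (g + 1), if k < j then -1 else 1

theorem sg_sq {g : ℕ} (k : Fin (g + 1)) : sg k * sg k = 1 := by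
  rw [sg, ← Finset.prod_mul_distrib]
  refine Finset.prod_eq_one fun j _ => ?_
  split_ifs <;> norm_num

theorem sg_ne_zero {g : ℕ} (k : Fin (g + 1)) : sg k ≠ 0 := by
  intro h; have := sg_sq k; rw [h] at this; norm_num at this

theorem sg_eq_prod {g : ℕ} (k : Fin (g + 1)) :
    sg k = ∏ i : Fin g, if k ≤ i.castSucc then (-1 : ℝ) else 1 := by
  rw [sg, Fin.prod_univ_succ, if_neg (by simp), one_mul]
  refine Finset.prod_congr rfl fun i _ => ?_
  simp only [Fin.le_castSucc_iff]

theorem Complex.sqrt_ofReal_nonneg {x : ℝ} (hx : 0 ≤ x) : Complex.sqrt x = (√|x| : ℝ) := by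
  rw [Complex.sqrt_of_nonneg (by exact_mod_cast hx), abs_of_nonneg hx]; simp

theorem Complex.sqrt_ofReal_nonpos {x : ℝ} (hx : x ≤ 0) :
    Complex.sqrt x = Complex.I * (√|x| : ℝ) := by
  have := Complex.sqrt_neg_of_nonneg (a := ((-x : ℝ) : ℂ)) (by exact_mod_cast neg_nonneg.mpr hx)
  rw [Complex.ofReal_neg, neg_neg] at this
  rw [this, ← Complex.ofReal_neg, Complex.sqrt_ofReal_nonneg (neg_nonneg.mpr hx), abs_neg]

theorem pair_right {α β x : ℝ} (hab : α < β) (hx : β ≤ x) :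
    Complex.sqrt ((x : ℂ) - α) * Complex.sqrt ((x : ℂ) - β) = (√(|x - α| * |x - β|) : ℝ) := by
  rw [← Complex.ofReal_sub, ← Complex.ofReal_sub, Complex.sqrt_ofReal_nonneg (by linarith),
    Complex.sqrt_ofReal_nonneg (by linarith), Real.sqrt_mul (abs_nonneg _), Complex.ofReal_mul]

theorem pair_mid {α β x : ℝ} (hx : α ≤ x) (hx' : x ≤ β) :
    Complex.sqrt ((x : ℂ) - α) * Complex.sqrt ((x : ℂ) - β) =
      Complex.I * (√(|x - α| * |x - β|) : ℝ) := by
  rw [← Complex.ofReal_sub, ← Complex.ofReal_sub, Complex.sqrt_ofReal_nonneg (by linarith),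
    Complex.sqrt_ofReal_nonpos (by linarith), Real.sqrt_mul (abs_nonneg _), Complex.ofReal_mul]
  ring

theorem pair_left {α β x : ℝ} (hab : α < β) (hx : x ≤ α) :
    Complex.sqrt ((x : ℂ) - α) * Complex.sqrt ((x : ℂ) - β) = -(√(|x - α| * |x - β|) : ℝ) := by
  rw [← Complex.ofReal_sub, ← Complex.ofReal_sub, Complex.sqrt_ofReal_nonpos (by linarith),
    Complex.sqrt_ofReal_nonpos (by linarith), Real.sqrt_mul (abs_nonneg _), Complex.ofReal_mul]
  linear_combination (Complex.ofReal √|x - α| * Complex.ofReal √|x - β|) * Complex.I_sq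

section
variable {g : ℕ} {a b : Fin (g + 1) → ℝ}

theorem sqp_ep (x : ℂ) : sqp (ep a b) x =
    ∏ j, (Complex.sqrt (x - a j) * Complex.sqrt (x - b j)) := by
  simp [sqp, ep, Finset.prod_mul_distrib]

theorem Bands.injective (h : Bands a b) : Function.Injective (ep a b) := by
  have haa : StrictMono a := fun j k hjk => (h.lt j).trans (h.gap j k hjk)
  have hbb : StrictMono b := fun j k hjk => (h.gap j k hjk).trans (h.lt k)
  have hab : ∀ j k, a j ≠ b k := by
    intro j k
    rcases lt_or_ge k j with hk | hk
    · exact (h.gap k j hk).ne'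
    · exact ((h.lt j).trans_le (hbb.monotone hk)).ne
  rintro (j | j) (k | k) hjk
  · exact congrArg _ (haa.injective hjk)
  · exact absurd hjk (hab j k)
  · exact absurd hjk.symm (hab k j)
  · exact congrArg _ (hbb.injective hjk)

theorem card_ep : Fintype.card (Fin (g + 1) ⊕ Fin (g + 1)) = 2 * (g + 1) := by
  simp; ring

theorem sqp_band (h : Bands a b) (k : Fin (g + 1)) {x : ℝ} (hx : x ∈ Icc (a k) (b k)) :
    sqp (ep a b) x = Complex.I * (sg k * wt a b x : ℝ) := by
  have key : ∀ j, Complex.sqrt ((x : ℂ) - a j) * Complex.sqrt ((x : ℂ) - b j) =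
      (if j = k then Complex.I else 1) *
        (((if k < j then -1 else 1) * √(|x - a j| * |x - b j|) : ℝ) : ℂ) := by
    intro j
    rcases lt_trichotomy j k with hj | hj | hj
    · rw [if_neg hj.ne, if_neg hj.le.not_gt, pair_right (h.lt j) ((h.gap j k hj).le.trans hx.1)]
      simp
    · subst hj
      rw [if_pos rfl, if_neg (lt_irrefl _), pair_mid hx.1 hx.2]
      simp
    · rw [if_neg hj.ne', if_pos hj, pair_left (h.lt j) (hx.2.trans (h.gap k j hj).le)]
      simp
  rw [sqp_ep, Finset.prod_congr rfl fun j _ => key j, Finset.prod_mul_distrib,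
    Finset.prod_ite_eq' Finset.univ k, if_pos (Finset.mem_univ k), ← Complex.ofReal_prod,
    Finset.prod_mul_distrib, sg, wt]

theorem sqp_gap (h : Bands a b) (i : Fin g) {x : ℝ} (hx : x ∈ Icc (b i.castSucc) (a i.succ)) :
    sqp (ep a b) x = (sg i.castSucc * wt a b x : ℝ) := by
  have hbb : StrictMono b := fun j k hjk => (h.gap j k hjk).trans (h.lt k)
  have haa : StrictMono a := fun j k hjk => (h.lt j).trans (h.gap j k hjk)
  have key : ∀ j, Complex.sqrt ((x : ℂ) - a j) * Complex.sqrt ((x : ℂ) - b j) =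
        (((if i.castSucc < j then -1 else 1) * √(|x - a j| * |x - b j|) : ℝ) : ℂ) := by
    intro j
    rcases lt_or_ge i.castSucc j with hj | hj
    · rw [if_pos hj, pair_left (h.lt j) (hx.2.trans (haa.monotone (Fin.castSucc_lt_iff_succ_le.mp hj)))]
      simp
    · rw [if_neg hj.not_gt, pair_right (h.lt j) ((hbb.monotone hj).trans hx.1)]
      simp
  rw [sqp_ep, Finset.prod_congr rfl fun j _ => key j, ← Complex.ofReal_prod,
    Finset.prod_mul_distrib, sg, wt]

theorem sqp_right (h : Bands a b) {x : ℝ} (hx : b (Fin.last g) ≤ x) :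
    sqp (ep a b) x = (wt a b x : ℝ) := by
  have hbb : StrictMono b := fun j k hjk => (h.gap j k hjk).trans (h.lt k)
  rw [sqp_ep, wt, Complex.ofReal_prod]
  exact Finset.prod_congr rfl fun j _ =>
    pair_right (h.lt j) ((hbb.monotone (Fin.le_last j)).trans hx)

theorem sqp_left (h : Bands a b) {x : ℝ} (hx : x ≤ a 0) :
    sqp (ep a b) x = ((-1) ^ (g + 1) * wt a b x : ℝ) := by
  have haa : StrictMono a := fun j k hjk => (h.lt j).trans (h.gap j k hjk)
  rw [sqp_ep, Finset.prod_congr rfl fun j _ =>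
    pair_left (h.lt j) (hx.trans (haa.monotone (Fin.zero_le j))), Finset.prod_neg,
    wt, Finset.card_univ, Fintype.card_fin]
  push_cast; ring

theorem wt_pos {x : ℝ} (ha : ∀ j, x ≠ a j) (hb : ∀ j, x ≠ b j) : 0 < wt a b x := by
  refine Finset.prod_pos fun j _ => Real.sqrt_pos.mpr ?_
  exact mul_pos (abs_pos.mpr (sub_ne_zero.mpr (ha j))) (abs_pos.mpr (sub_ne_zero.mpr (hb j)))

theorem wt_nonneg (x : ℝ) : 0 ≤ wt a b x := Finset.prod_nonneg fun _ _ => Real.sqrt_nonneg _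

theorem wt_continuous : Continuous (wt a b) := by
  unfold wt; fun_prop

theorem wt_pos_gap (h : Bands a b) (i : Fin g) {x : ℝ} (hx : x ∈ Ioo (b i.castSucc) (a i.succ)) :
    0 < wt a b x := by
  have hbb : StrictMono b := fun j k hjk => (h.gap j k hjk).trans (h.lt k)
  have haa : StrictMono a := fun j k hjk => (h.lt j).trans (h.gap j k hjk)
  have key : ∀ j, (x < a j ∧ x < b j) ∨ (a j < x ∧ b j < x) := by
    intro j
    rcases lt_or_ge i.castSucc j with hj | hj
    · have := hx.2.trans_le (haa.monotone (Fin.castSucc_lt_iff_succ_le.mp hj))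
      exact Or.inl ⟨this, this.trans (h.lt j)⟩
    · have := (hbb.monotone hj).trans_lt hx.1
      exact Or.inr ⟨(h.lt j).trans this, this⟩
  refine wt_pos (fun j hj => ?_) fun j hj => ?_ <;> rcases key j with h | h <;> linarith [h.1, h.2]

theorem wt_pos_band (h : Bands a b) (k : Fin (g + 1)) {x : ℝ} (hx : x ∈ Ioo (a k) (b k)) :
    0 < wt a b x := by
  have key : ∀ j, x ≠ a j ∧ x ≠ b j := by
    intro j
    rcases lt_trichotomy j k with hj | hj | hj
    · have := (h.gap j k hj).trans hx.1
      exact ⟨((h.lt j).trans this).ne', this.ne'⟩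
    · subst hj; exact ⟨hx.1.ne', hx.2.ne⟩
    · have := hx.2.trans (h.gap k j hj)
      exact ⟨this.ne, (this.trans (h.lt j)).ne⟩
  exact wt_pos (fun j => (key j).1) fun j => (key j).2

theorem wt_pos_right (h : Bands a b) {x : ℝ} (hx : b (Fin.last g) < x) : 0 < wt a b x := by
  have hbb : StrictMono b := fun j k hjk => (h.gap j k hjk).trans (h.lt k)
  have key : ∀ j, b j < x := fun j => (hbb.monotone (Fin.le_last j)).trans_lt hx
  exact wt_pos (fun j => ((h.lt j).trans (key j)).ne') fun j => (key j).ne'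

theorem wt_pos_left (h : Bands a b) {x : ℝ} (hx : x < a 0) : 0 < wt a b x := by
  have haa : StrictMono a := fun j k hjk => (h.lt j).trans (h.gap j k hjk)
  have key : ∀ j, x < a j := fun j => hx.trans_le (haa.monotone (Fin.zero_le j))
  exact wt_pos (fun j => (key j).ne) fun j => ((key j).trans (h.lt j)).ne

theorem aeval_ofReal' (p : ℝ[X]) (x : ℝ) : aeval (x : ℂ) p = (p.eval x : ℝ) := by
  simpa using Polynomial.aeval_algebraMap_apply ℂ x p

theorem norm_sqp_ofReal (x : ℝ) : ‖sqp (ep a b) x‖ = wt a b x := by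
  rw [sqp_ep, norm_prod, wt]
  refine Finset.prod_congr rfl fun j _ => ?_
  rw [norm_mul, Complex.norm_sqrt_eq, Complex.norm_sqrt_eq, ← Real.sqrt_eq_rpow,
    ← Real.sqrt_eq_rpow, ← Complex.ofReal_sub, ← Complex.ofReal_sub, Complex.norm_real,
    Complex.norm_real, Real.norm_eq_abs, Real.norm_eq_abs, Real.sqrt_mul (abs_nonneg _)]

theorem vdiff_locallyIntegrable (h : Bands a b) (p : ℝ[X]) :
    LocallyIntegrable (fun x : ℝ => vdiff (ep a b) p x) := by
  obtain ⟨K, hK0, hK⟩ := norm_vdiff_le (ep a b) h.injective p p.natDegree le_rfl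
  set s : ℝ := p.natDegree + 1 / 2 - Fintype.card (Fin (g + 1) ⊕ Fin (g + 1)) / 2
  have hl : LocallyIntegrable (fun x : ℝ => ((K * (1 + ‖x‖) ^ s) : ℝ) • sing (ep a b) x) := by
    have hc : Continuous fun x : ℝ => K * (1 + ‖x‖) ^ s := by
      refine continuous_const.mul (Continuous.rpow_const (by fun_prop) fun x => Or.inl ?_)
      positivity
    have := (locallyIntegrable_sing (ep a b)).locallyIntegrableOn univ
    rw [← locallyIntegrableOn_univ]
    exact this.continuousOn_smul isOpen_univ.isLocallyClosed hc.continuousOn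
  refine hl.mono ?_ ?_
  · have hm : Measurable fun x : ℝ => vdiff (ep a b) p x := by
      unfold vdiff sqp Complex.sqrt
      have h1 : Measurable fun x : ℝ => aeval (x : ℂ) p :=
        ((p.differentiable_aeval (𝕜 := ℂ)).continuous.comp Complex.continuous_ofReal).measurable
      refine h1.div (Finset.measurable_prod _ fun i _ => ?_)
      fun_prop
    exact hm.aestronglyMeasurable
  · refine Filter.Eventually.of_forall fun x => ?_
    have h1 := hK x
    rw [Complex.norm_real] at h1
    refine h1.trans (le_trans (le_of_eq ?_) (le_abs_self _))
    rw [smul_eq_mul, sing]; ring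

theorem vdiff_intervalIntegrable (h : Bands a b) (p : ℝ[X]) (x y : ℝ) :
    IntervalIntegrable (fun x : ℝ => vdiff (ep a b) p x) volume x y :=
  ((vdiff_locallyIntegrable h p).integrableOn_isCompact isCompact_uIcc).intervalIntegrable

theorem norm_vdiff_ofReal (p : ℝ[X]) (x : ℝ) :
    ‖vdiff (ep a b) p x‖ = |p.eval x| / wt a b x := by
  rw [vdiff, norm_div, norm_sqp_ofReal, aeval_ofReal', Complex.norm_real, Real.norm_eq_abs]

theorem div_wt_intervalIntegrable (h : Bands a b) (p : ℝ[X]) (x y : ℝ) :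
    IntervalIntegrable (fun x : ℝ => p.eval x / wt a b x) volume x y := by
  refine (vdiff_intervalIntegrable h p x y).mono_fun ?_ ?_
  · refine Measurable.aestronglyMeasurable ?_
    exact p.continuous.measurable.div wt_continuous.measurable
  · refine Filter.Eventually.of_forall fun t => ?_
    beta_reduce
    rw [norm_vdiff_ofReal, norm_div, Real.norm_eq_abs, Real.norm_eq_abs,
      abs_of_nonneg (wt_nonneg (a := a) (b := b) t)]

end

/-! ### The polynomial with vanishing gap periods -/

section
variable {g : ℕ} {a b : Fin (g + 1) → ℝ}

/-- A polynomial whose weighted integral over a gap vanishes has a root in that gap. -/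
theorem exists_root_gap (h : Bands a b) (i : Fin g) (p : ℝ[X])
    (hp : ∫ x in b i.castSucc..a i.succ, p.eval x / wt a b x = 0) :
    ∃ ζ ∈ Ioo (b i.castSucc) (a i.succ), p.eval ζ = 0 := by
  by_contra! hne
  have hlt : b i.castSucc < a i.succ := h.gap _ _ Fin.castSucc_lt_succ
  have hpc : ContinuousOn (fun x => p.eval x) (Ioo (b i.castSucc) (a i.succ)) :=
    p.continuous.continuousOn
  have hInt := div_wt_intervalIntegrable h p (b i.castSucc) (a i.succ)
  by_cases hpos : ∀ x ∈ Ioo (b i.castSucc) (a i.succ), 0 < p.eval x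
  · have := intervalIntegral.intervalIntegral_pos_of_pos_on hInt
      (fun x hx => div_pos (hpos x hx) (wt_pos_gap h i hx)) hlt
    exact this.ne' hp
  · push Not at hpos
    obtain ⟨y, hy, hy0⟩ := hpos
    have hneg : ∀ x ∈ Ioo (b i.castSucc) (a i.succ), p.eval x < 0 := by
      intro x hx
      by_contra! hx0
      obtain ⟨ζ, hζ, hζ0⟩ := isPreconnected_Ioo.intermediate_value hy hx hpc ⟨hy0, hx0⟩
      exact hne ζ hζ hζ0
    have := intervalIntegral.intervalIntegral_pos_of_pos_on hInt.neg
      (fun x hx => neg_pos.mpr (div_neg_of_neg_of_pos (hneg x hx) (wt_pos_gap h i hx))) hlt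
    simp only [Pi.neg_apply, intervalIntegral.integral_neg, hp] at this
    simp at this

/-- The monomial periods over the gaps. -/
noncomputable def gapInt (a b : Fin (g + 1) → ℝ) (i : Fin g) (m : ℕ) : ℝ :=
  ∫ x in b i.castSucc..a i.succ, x ^ m / wt a b x

/-- The period matrix of the monomials `1, X, …, X^{g-1}` over the gaps. -/
noncomputable def gapM (a b : Fin (g + 1) → ℝ) : Matrix (Fin g) (Fin g) ℝ :=
  Matrix.of fun i m => gapInt a b i m

/-- Coefficients of the lower-order part of `rpoly`. -/
noncomputable def gapC (a b : Fin (g + 1) → ℝ) : Fin g → ℝ :=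
  (gapM a b)⁻¹.mulVec fun i => gapInt a b i g

/-- The monic polynomial `r` of degree `g` such that `r dx / √D` has zero integral over every gap;
this differential is the derivative of the complex Green function of the bands. -/
noncomputable def rpoly (a b : Fin (g + 1) → ℝ) : ℝ[X] :=
  X ^ g - ∑ m : Fin g, C (gapC a b m) * X ^ (m : ℕ)

theorem gap_roots_distinct (h : Bands a b) (ζ : Fin g → ℝ)
    (hζ : ∀ i, ζ i ∈ Ioo (b i.castSucc) (a i.succ)) : StrictMono ζ := by
  intro i j hij
  have h1 : i.succ ≤ j.castSucc := by
    rw [Fin.le_def]; simpa using hij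
  have h2 : a i.succ < b j.castSucc := by
    rcases h1.lt_or_eq with h1 | h1
    · exact (h.lt _).trans ((h.gap _ _ h1).trans (h.lt _))
    · rw [h1]; exact h.lt _
  exact (hζ i).2.trans (h2.trans (hζ j).1)

theorem gap_sum_integral (h : Bands a b) (i : Fin g) (c : Fin g → ℝ) :
    ∫ x in b i.castSucc..a i.succ, (∑ m : Fin g, C (c m) * X ^ (m : ℕ)).eval x / wt a b x
      = (gapM a b).mulVec c i := by
  have hI : ∀ m : ℕ, IntervalIntegrable (fun x => x ^ m / wt a b x) volume (b i.castSucc)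
      (a i.succ) := fun m => by
    simpa using div_wt_intervalIntegrable h (X ^ m) (b i.castSucc) (a i.succ)
  have : (fun x => (∑ m : Fin g, C (c m) * X ^ (m : ℕ)).eval x / wt a b x) =
      fun x => ∑ m : Fin g, c m * (x ^ (m : ℕ) / wt a b x) := by
    funext x
    rw [eval_finsetSum, Finset.sum_div]
    refine Finset.sum_congr rfl fun m _ => ?_
    simp; ring
  rw [this, intervalIntegral.integral_finsetSum
    (f := fun (m : Fin g) x => c m * (x ^ (m : ℕ) / wt a b x)) fun m _ => (hI m).const_mul _]
  simp only [intervalIntegral.integral_const_mul, Matrix.mulVec, dotProduct, gapM, Matrix.of_apply,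
    gapInt]
  exact Finset.sum_congr rfl fun m _ => mul_comm _ _

theorem natDegree_low (c : Fin g → ℝ) :
    (∑ m : Fin g, C (c m) * X ^ (m : ℕ)).degree < (g : WithBot ℕ) := by
  rw [← Polynomial.mem_degreeLT]
  refine Submodule.sum_mem _ fun m _ => ?_
  rw [Polynomial.mem_degreeLT]
  exact (degree_C_mul_X_pow_le _ _).trans_lt (by exact_mod_cast m.2)

/-- A polynomial of degree less than `g` cannot have a root in each of the `g` gaps. -/
theorem gapM_det (h : Bands a b) : (gapM a b).det ≠ 0 := by
  intro hdet
  obtain ⟨c, hc, hc0⟩ := Matrix.exists_mulVec_eq_zero_iff.mpr hdet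
  set p : ℝ[X] := ∑ m : Fin g, C (c m) * X ^ (m : ℕ) with hp
  have hroot : ∀ i : Fin g, ∃ ζ ∈ Ioo (b i.castSucc) (a i.succ), p.eval ζ = 0 := fun i =>
    exists_root_gap h i p (by rw [hp, gap_sum_integral h, hc0]; rfl)
  choose ζ hζ hζ0 using hroot
  have hinj := (gap_roots_distinct h ζ hζ).injective
  have hp0 : p = 0 := Polynomial.eq_zero_of_degree_lt_of_eval_index_eq_zero (s := Finset.univ) (v := ζ)
    hinj.injOn (by simpa using natDegree_low c) fun i _ => hζ0 i
  refine hc (funext fun m => ?_)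
  have : p.coeff m = c m := by
    rw [hp, finsetSum_coeff]
    simp only [coeff_C_mul, coeff_X_pow]
    rw [Finset.sum_eq_single m]
    · simp
    · intro k _ hk
      rw [if_neg, mul_zero]
      exact fun he => hk (Fin.ext he.symm)
    · simp
  rw [← this, hp0]; simp

theorem rpoly_monic (a b : Fin (g + 1) → ℝ) : (rpoly a b).Monic :=
  monic_X_pow_sub (by
    have := natDegree_low (gapC a b)
    exact this)

theorem rpoly_natDegree (a b : Fin (g + 1) → ℝ) : (rpoly a b).natDegree = g := by
  have h1 := natDegree_low (gapC a b)
  rw [← degree_X_pow (R := ℝ) g] at h1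
  rw [rpoly]
  refine natDegree_eq_of_degree_eq_some ?_
  rw [degree_sub_eq_left_of_degree_lt h1, degree_X_pow]

theorem rpoly_gap (h : Bands a b) (i : Fin g) :
    ∫ x in b i.castSucc..a i.succ, (rpoly a b).eval x / wt a b x = 0 := by
  have hI := div_wt_intervalIntegrable h (X ^ g) (b i.castSucc) (a i.succ)
  have hJ := div_wt_intervalIntegrable h (∑ m : Fin g, C (gapC a b m) * X ^ (m : ℕ))
    (b i.castSucc) (a i.succ)
  simp only [rpoly, eval_sub, sub_div]
  rw [intervalIntegral.integral_sub hI hJ, gap_sum_integral h, gapC, Matrix.mulVec_mulVec,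
    Matrix.mul_nonsing_inv _ (isUnit_iff_ne_zero.mpr (gapM_det h)), Matrix.one_mulVec]
  simp [gapInt]

/-- `r` has exactly one root in each gap. -/
theorem rpoly_factor (h : Bands a b) : ∃ ζ : Fin g → ℝ,
    (∀ i, ζ i ∈ Ioo (b i.castSucc) (a i.succ)) ∧ rpoly a b = ∏ i, (X - C (ζ i)) := by
  choose ζ hζ hζ0 using fun i => exists_root_gap h i _ (rpoly_gap h i)
  refine ⟨ζ, hζ, ?_⟩
  have hinj := (gap_roots_distinct h ζ hζ).injective
  have hm : (∏ i, (X - C (ζ i))).Monic := monic_prod_of_monic _ _ fun i _ => monic_X_sub_C _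
  have hdeg : (∏ i, (X - C (ζ i))).natDegree = g := by simp
  have hd : (∏ i, (X - C (ζ i))).degree = (g : WithBot ℕ) := by
    rw [degree_eq_natDegree hm.ne_zero, hdeg]
  have hr : (rpoly a b).degree = (g : WithBot ℕ) := by
    rw [degree_eq_natDegree (rpoly_monic a b).ne_zero, rpoly_natDegree]
  rw [← sub_eq_zero]
  refine Polynomial.eq_zero_of_degree_lt_of_eval_index_eq_zero (s := Finset.univ) (v := ζ) hinj.injOn ?_ ?_
  · have := degree_sub_lt_left (hr.trans hd.symm) (rpoly_monic a b).ne_zero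
      ((rpoly_monic a b).leadingCoeff.trans hm.leadingCoeff.symm)
    rw [hr] at this; simpa using this
  · intro i _
    rw [eval_sub, hζ0, eval_prod, Finset.prod_eq_zero (Finset.mem_univ i) (by simp), sub_zero]

end

/-! ### The complex Green function and harmonic measures -/

section
variable {g : ℕ} {a b : Fin (g + 1) → ℝ}

theorem Bands.b_mono (h : Bands a b) {j k : Fin (g + 1)} (hjk : j ≤ k) : b j ≤ b k := by
  rcases hjk.lt_or_eq with h1 | h1
  · exact ((h.gap _ _ h1).trans (h.lt _)).le
  · rw [h1]

theorem Bands.a_mono (h : Bands a b) {j k : Fin (g + 1)} (hjk : j ≤ k) : a j ≤ a k := by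
  rcases hjk.lt_or_eq with h1 | h1
  · exact ((h.lt _).trans (h.gap _ _ h1)).le
  · rw [h1]

/-- On a band the sign of `r` is the sign of the band. -/
theorem sg_mul_rpoly_band (h : Bands a b) (k : Fin (g + 1)) {x : ℝ} (hx : x ∈ Icc (a k) (b k)) :
    sg k * (rpoly a b).eval x = |(rpoly a b).eval x| := by
  obtain ⟨ζ, hζ, hr⟩ := rpoly_factor h
  rw [hr, eval_prod, sg_eq_prod, ← Finset.prod_mul_distrib, Finset.abs_prod]
  refine Finset.prod_congr rfl fun i _ => ?_
  simp only [eval_sub, eval_X, eval_C]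
  split_ifs with hk
  · have : x < ζ i := (hx.2.trans (h.b_mono hk)).trans_lt (hζ i).1
    rw [abs_of_neg (by linarith)]; ring
  · have hk' : i.succ ≤ k := Fin.castSucc_lt_iff_succ_le.mp (not_le.mp hk)
    have : ζ i < x := (hζ i).2.trans_le ((h.a_mono hk').trans hx.1)
    rw [abs_of_pos (by linarith)]; ring

theorem rpoly_band_ne_zero (h : Bands a b) (k : Fin (g + 1)) {x : ℝ} (hx : x ∈ Icc (a k) (b k)) :
    (rpoly a b).eval x ≠ 0 := by
  obtain ⟨ζ, hζ, hr⟩ := rpoly_factor h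
  rw [hr, eval_prod, Finset.prod_ne_zero_iff]
  intro i _
  simp only [eval_sub, eval_X, eval_C, sub_ne_zero]
  rcases le_or_gt k i.castSucc with hk | hk
  · exact ((hx.2.trans (h.b_mono hk)).trans_lt (hζ i).1).ne
  · have hk' : i.succ ≤ k := Fin.castSucc_lt_iff_succ_le.mp hk
    exact ((hζ i).2.trans_le ((h.a_mono hk').trans hx.1)).ne'

/-- In a gap the signed `r` passes from positive to negative at its root `ζ`; hence the Green
function rises and then falls along the gap. -/
theorem sg_mul_rpoly_gap (h : Bands a b) (m : Fin g) : ∃ ζ ∈ Ioo (b m.castSucc) (a m.succ),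
    ∀ x ∈ Icc (b m.castSucc) (a m.succ), ∃ c : ℝ, 0 ≤ c ∧
      sg m.castSucc * (rpoly a b).eval x = c * (ζ - x) := by
  obtain ⟨ζ, hζ, hr⟩ := rpoly_factor h
  refine ⟨ζ m, hζ m, fun x hx => ⟨∏ i ∈ Finset.univ.erase m, |x - ζ i|,
    Finset.prod_nonneg fun _ _ => abs_nonneg _, ?_⟩⟩
  rw [hr, eval_prod, sg_eq_prod, ← Finset.prod_mul_distrib,
    ← Finset.mul_prod_erase _ _ (Finset.mem_univ m), mul_comm]
  congr 1
  · refine Finset.prod_congr rfl fun i hi => ?_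
    have him : i ≠ m := Finset.ne_of_mem_erase hi
    have hmono := gap_roots_distinct h ζ hζ
    simp only [eval_sub, eval_X, eval_C]
    split_ifs with hk
    · have hmi : m < i := lt_of_le_of_ne (by simpa using hk) him.symm
      have h1 : m.succ ≤ i.castSucc := Fin.castSucc_lt_iff_succ_le.mp (by simpa using hmi)
      have : x < ζ i := by
        refine (hx.2.trans ?_).trans_lt (hζ i).1
        exact (h.a_mono h1).trans (h.lt _).le
      rw [abs_of_neg (by linarith)]; ring
    · have hmi : i < m := by simpa using hk
      have h1 : i.succ ≤ m.castSucc := Fin.castSucc_lt_iff_succ_le.mp (by simpa using hmi)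
      have : ζ i < x := (hζ i).2.trans_le (((h.a_mono h1).trans (h.lt _).le).trans hx.1)
      rw [abs_of_pos (by linarith)]; ring
  · simp

theorem rpoly_right (h : Bands a b) {x : ℝ} (hx : b (Fin.last g) ≤ x) : 0 < (rpoly a b).eval x := by
  obtain ⟨ζ, hζ, hr⟩ := rpoly_factor h
  rw [hr, eval_prod]
  refine Finset.prod_pos fun i _ => ?_
  simp only [eval_sub, eval_X, eval_C, sub_pos]
  refine (hζ i).2.trans_le (le_trans ?_ hx)
  exact (h.lt _).le.trans (h.b_mono (Fin.le_last _))

theorem vdiff_band (h : Bands a b) (k : Fin (g + 1)) {x : ℝ} (hx : x ∈ Icc (a k) (b k)) :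
    vdiff (ep a b) (rpoly a b) x = -Complex.I * (|(rpoly a b).eval x| / wt a b x : ℝ) := by
  rw [vdiff, sqp_band h k hx, aeval_ofReal', ← sg_mul_rpoly_band h k hx]
  have h1 : (sg k : ℂ) * sg k = 1 := by exact_mod_cast sg_sq k
  have h2 : ((sg k : ℂ))⁻¹ = sg k := (eq_inv_of_mul_eq_one_left h1).symm
  push_cast
  rw [div_eq_mul_inv, div_eq_mul_inv, mul_inv, mul_inv, h2, Complex.inv_I]
  ring

theorem vdiff_gap (h : Bands a b) (i : Fin g) {x : ℝ}
    (hx : x ∈ Icc (b i.castSucc) (a i.succ)) :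
    vdiff (ep a b) (rpoly a b) x = (sg i.castSucc * (rpoly a b).eval x / wt a b x : ℝ) := by
  rw [vdiff, sqp_gap h i hx, aeval_ofReal']
  have h1 := sg_sq i.castSucc
  have h2 : (sg i.castSucc)⁻¹ = sg i.castSucc := (eq_inv_of_mul_eq_one_left h1).symm
  rw [← Complex.ofReal_div]
  congr 1
  rw [div_eq_mul_inv, div_eq_mul_inv, mul_inv, h2]; ring

theorem vdiff_right (h : Bands a b) {x : ℝ} (hx : b (Fin.last g) ≤ x) :
    vdiff (ep a b) (rpoly a b) x = ((rpoly a b).eval x / wt a b x : ℝ) := by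
  rw [vdiff, sqp_right h hx, aeval_ofReal', ← Complex.ofReal_div]

theorem vdiff_left (h : Bands a b) {x : ℝ} (hx : x ≤ a 0) :
    vdiff (ep a b) (rpoly a b) x = ((rpoly a b).eval x / ((-1) ^ (g + 1) * wt a b x) : ℝ) := by
  rw [vdiff, sqp_left h hx, aeval_ofReal', ← Complex.ofReal_div]

/-- The harmonic measure of band `k` seen from infinity. -/
noncomputable def hm (a b : Fin (g + 1) → ℝ) (k : Fin (g + 1)) : ℝ :=
  (∫ x in a k..b k, |(rpoly a b).eval x| / wt a b x) / Real.pi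

/-- `Θ` is the complex Green function of the bands on the closed upper half-plane, with pole at
infinity: `Re Θ` is the Green function, and `Im Θ` records the harmonic measures of the bands. -/
structure Green (a b : Fin (g + 1) → ℝ) (Θ : ℂ → ℂ) : Prop where
  cont : ContinuousOn Θ {z | 0 ≤ z.im}
  deriv : ∀ z : ℂ, 0 < z.im → HasDerivAt Θ (vdiff (ep a b) (rpoly a b) z) z
  re_band : ∀ k, ∀ x : ℝ, x ∈ Icc (a k) (b k) → (Θ x).re = 0
  re_gap : ∀ i : Fin g, ∀ x : ℝ, x ∈ Icc (b i.castSucc) (a i.succ) → 0 ≤ (Θ x).re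
  re_right : ∀ x : ℝ, b (Fin.last g) < x → 0 < (Θ x).re
  im_gap : ∀ i : Fin g, ∀ x : ℝ, x ∈ Icc (b i.castSucc) (a i.succ) →
    (Θ x).im = (Θ (a i.succ)).im
  im_right : ∀ x : ℝ, b (Fin.last g) ≤ x → (Θ x).im = 0
  im_left : ∀ x : ℝ, x ≤ a 0 → (Θ x).im = Real.pi
  im_band : ∀ k, (Θ (a k)).im - (Θ (b k)).im = Real.pi * hm a b k

/-- The Green function is `Θ(z) = ∫ r dz/√D`, taken from `b_g`. Vanishing of the gap periods makes
`Re Θ` zero on all bands at once, and the half turn at infinity fixes the total variation of `Im Θ`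
to be `π`. -/
theorem exists_green (h : Bands a b) : ∃ Θ, Green a b Θ := by
  obtain ⟨Φ, hΦc, hΦd, hΦi⟩ := vdiff_primitive (ep a b) h.injective (rpoly a b)
  set B : ℝ := b (Fin.last g) with hB
  set Θ : ℂ → ℂ := fun z => Φ z - Φ B with hΘ
  have hc : ContinuousOn Θ {z | 0 ≤ z.im} := hΦc.sub continuousOn_const
  have hd : ∀ z : ℂ, 0 < z.im → HasDerivAt Θ (vdiff (ep a b) (rpoly a b) z) z := fun z hz =>
    (hΦd z hz).sub_const _
  have hi : ∀ x x' : ℝ, Θ x' - Θ x = ∫ t in x..x', vdiff (ep a b) (rpoly a b) t := fun x x' => by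
    rw [← hΦi]; simp [hΘ]
  have hΘB : Θ B = 0 := by simp [hΘ]
  -- increments of `Θ` on intervals where the differential is real or imaginary
  have hreal : ∀ (x x' : ℝ) (f : ℝ → ℝ), x ≤ x' →
      (∀ t ∈ Icc x x', vdiff (ep a b) (rpoly a b) t = (f t : ℝ)) →
      Θ x' - Θ x = ((∫ t in x..x', f t : ℝ) : ℂ) := by
    intro x x' f hxx hf
    rw [hi, ← intervalIntegral.integral_ofReal]
    refine intervalIntegral.integral_congr fun t ht => ?_
    rw [uIcc_of_le hxx] at ht
    exact hf t ht
  have himag : ∀ (k : Fin (g + 1)) (x x' : ℝ), x ≤ x' → a k ≤ x → x' ≤ b k →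
      Θ x' - Θ x = -Complex.I * ((∫ t in x..x', |(rpoly a b).eval t| / wt a b t : ℝ) : ℂ) := by
    intro k x x' hxx hx hx'
    rw [hi, ← intervalIntegral.integral_ofReal, ← intervalIntegral.integral_const_mul]
    refine intervalIntegral.integral_congr fun t ht => ?_
    rw [uIcc_of_le hxx] at ht
    exact vdiff_band h k ⟨hx.trans ht.1, ht.2.trans hx'⟩
  have hgapf : ∀ (i : Fin g) (x x' : ℝ), x ≤ x' → b i.castSucc ≤ x → x' ≤ a i.succ →
      Θ x' - Θ x = ((∫ t in x..x', sg i.castSucc * (rpoly a b).eval t / wt a b t : ℝ) : ℂ) :=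
    fun i x x' hxx hx hx' => hreal x x' _ hxx fun t ht =>
      vdiff_gap h i ⟨hx.trans ht.1, ht.2.trans hx'⟩
  have hgaplt : ∀ i : Fin g, b i.castSucc < a i.succ := fun i => h.gap _ _ Fin.castSucc_lt_succ
  have hgap0 : ∀ i : Fin g, Θ (a i.succ) = Θ (b i.castSucc) := by
    intro i
    rw [← sub_eq_zero, hgapf i _ _ (hgaplt i).le le_rfl le_rfl]
    simp_rw [mul_div_assoc]
    rw [intervalIntegral.integral_const_mul, rpoly_gap h i]; simp
  have hband_re : ∀ k, ∀ x : ℝ, x ∈ Icc (a k) (b k) → (Θ x).re = (Θ (b k)).re := by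
    intro k x hx
    have := congrArg Complex.re (himag k x (b k) hx.2 hx.1 le_rfl)
    simp at this
    linarith
  have hb0 : ∀ k, (Θ (b k)).re = 0 := by
    intro k
    induction k using Fin.reverseInduction with
    | last => rw [← hB, hΘB]; rfl
    | cast i ih =>
      rw [← hgap0, hband_re i.succ _ ⟨le_rfl, (h.lt _).le⟩, ih]
  have hright : ∀ x : ℝ, B ≤ x →
      Θ x = ((∫ t in B..x, (rpoly a b).eval t / wt a b t : ℝ) : ℂ) := by
    intro x hx
    rw [← hreal B x _ hx fun t ht => vdiff_right h ht.1, hΘB, sub_zero]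
  have him_right : ∀ x : ℝ, B ≤ x → (Θ x).im = 0 := fun x hx => by rw [hright x hx]; simp
  have hleft : ∀ x : ℝ, x ≤ a 0 → (Θ x).im = (Θ (a 0)).im := by
    intro x hx
    have := congrArg Complex.im (hreal x (a 0) _ hx fun t ht => vdiff_left h ht.2)
    simp at this
    linarith
  have hpi : (Θ (a 0)).im = Real.pi := by
    by_contra hne
    have hpos : 0 < |(Θ (a 0)).im - Real.pi| := abs_pos.mpr (sub_ne_zero.mpr hne)
    obtain ⟨T, hT0, hT⟩ := theta_halfturn (ep a b) g card_ep (rpoly a b) (rpoly_monic a b)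
      (rpoly_natDegree a b) Θ hc hd (|(Θ (a 0)).im - Real.pi| / (2 * Real.pi))
      (by have := Real.pi_pos; positivity)
    have h1 := hT (max T (max B (-a 0))) (le_max_left _ _)
    rw [him_right _ ((le_max_left _ _).trans (le_max_right _ _)), sub_zero, hleft _ (by
      have := (le_max_right B (-a 0)).trans (le_max_right T _)
      linarith)] at h1
    have h2 : Real.pi * (|(Θ (a 0)).im - Real.pi| / (2 * Real.pi)) =
      |(Θ (a 0)).im - Real.pi| / 2 := by field_simp
    rw [h2] at h1
    linarith
  refine ⟨Θ, hc, hd, ?_, ?_, ?_, ?_, him_right, ?_, ?_⟩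
  · intro k x hx
    rw [hband_re k x hx, hb0]
  · intro i x hx
    obtain ⟨ζ, hζ, hs⟩ := sg_mul_rpoly_gap h i
    rcases le_total x ζ with hxζ | hxζ
    · have := congrArg Complex.re (hgapf i _ x hx.1 le_rfl hx.2)
      rw [Complex.sub_re, hb0, sub_zero, Complex.ofReal_re] at this
      rw [this]
      refine intervalIntegral.integral_nonneg hx.1 fun t ht => ?_
      obtain ⟨c, hc0, hcs⟩ := hs t ⟨ht.1, ht.2.trans hx.2⟩
      rw [hcs]
      exact div_nonneg (mul_nonneg hc0 (by linarith [ht.2])) (wt_nonneg _)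
    · have := congrArg Complex.re (hgapf i x _ hx.2 hx.1 le_rfl)
      rw [Complex.sub_re, hgap0, hb0, zero_sub, Complex.ofReal_re] at this
      rw [← neg_nonpos, this]
      rw [← neg_nonneg, ← intervalIntegral.integral_neg]
      refine intervalIntegral.integral_nonneg hx.2 fun t ht => neg_nonneg.mpr ?_
      obtain ⟨c, hc0, hcs⟩ := hs t ⟨hx.1.trans ht.1, ht.2⟩
      rw [hcs]
      refine div_nonpos_of_nonpos_of_nonneg ?_ (wt_nonneg _)
      exact mul_nonpos_of_nonneg_of_nonpos hc0 (by linarith [ht.1])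
  · intro x hx
    rw [hright x hx.le, Complex.ofReal_re]
    exact intervalIntegral.intervalIntegral_pos_of_pos_on (div_wt_intervalIntegrable h _ _ _)
      (fun t ht => div_pos (rpoly_right h ht.1.le) (wt_pos_right h ht.1)) hx
  · intro i x hx
    have := congrArg Complex.im (hgapf i x _ hx.2 hx.1 le_rfl)
    simp at this
    linarith
  · intro x hx
    rw [hleft x hx, hpi]
  · intro k
    have := congrArg Complex.im (himag k _ _ (h.lt k).le le_rfl le_rfl)
    simp only [Complex.sub_im, Complex.mul_im, Complex.neg_re, Complex.I_re, Complex.neg_im,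
      Complex.I_im, Complex.ofReal_re, Complex.ofReal_im] at this
    rw [hm, mul_div_cancel₀ _ Real.pi_ne_zero]
    linarith

theorem hm_sum (h : Bands a b) : ∑ k, hm a b k = 1 := by
  obtain ⟨Θ, hΘ⟩ := exists_green h
  have h1 : Real.pi * ∑ k, hm a b k = Real.pi := by
    rw [Finset.mul_sum]
    simp_rw [← hΘ.im_band]
    rw [Finset.sum_sub_distrib, Fin.sum_univ_succ, Fin.sum_univ_castSucc (fun k => (Θ (b k)).im),
      hΘ.im_left _ le_rfl, hΘ.im_right _ le_rfl]
    have : ∀ i : Fin g, (Θ (b i.castSucc)).im = (Θ (a i.succ)).im := fun i =>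
      hΘ.im_gap i _ ⟨le_rfl, (h.gap _ _ Fin.castSucc_lt_succ).le⟩
    simp [this]
  exact mul_left_cancel₀ Real.pi_ne_zero (by rw [h1, mul_one])

end

/-! ### Rational harmonic measures give Pell–Abel solutions -/

section
variable {g : ℕ} {a b : Fin (g + 1) → ℝ}

theorem real_cover (a b : Fin (g + 1) → ℝ) (x : ℝ) : x ≤ a 0 ∨ b (Fin.last g) ≤ x ∨
    (∃ k, x ∈ Icc (a k) (b k)) ∨ ∃ i : Fin g, x ∈ Icc (b i.castSucc) (a i.succ) := by
  by_contra! hcon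
  obtain ⟨h0, hl, hk, hi⟩ := hcon
  have key : ∀ k, a k < x := by
    intro k
    induction k using Fin.induction with
    | zero => exact h0
    | succ i ih =>
      have h1 : b i.castSucc < x := by
        by_contra! hh
        exact hk i.castSucc ⟨ih.le, hh⟩
      by_contra! hh
      exact hi i ⟨h1.le, hh⟩
  exact hk (Fin.last g) ⟨(key _).le, hl.le⟩

theorem poly_eq_zero_of_upper (q : ℝ[X]) (hq : ∀ z : ℂ, 0 < z.im → aeval z q = 0) : q = 0 := by
  have h1 : q.map (algebraMap ℝ ℂ) = 0 := by
    refine Polynomial.eq_zero_of_infinite_isRoot _ ?_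
    refine (infinite_range_of_injective (f := fun n : ℕ => Complex.I * ((n : ℂ) + 1)) ?_).mono ?_
    · intro m n hmn
      have := mul_left_cancel₀ Complex.I_ne_zero hmn
      exact_mod_cast add_right_cancel this
    · rintro _ ⟨n, rfl⟩
      rw [mem_ofPred_eq, IsRoot.def, Polynomial.eval_map_algebraMap]
      refine hq _ ?_
      simp
      positivity
  exact (Polynomial.map_eq_zero _).mp h1

theorem norm_cosh_le (z : ℂ) : ‖Complex.cosh z‖ ≤ Real.exp ‖z‖ := by
  rw [Complex.cosh, norm_div, Complex.norm_two]
  have h1 : ‖Complex.exp z‖ ≤ Real.exp ‖z‖ := Complex.norm_exp_le_exp_norm z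
  have h2 : ‖Complex.exp (-z)‖ ≤ Real.exp ‖z‖ := by
    simpa using Complex.norm_exp_le_exp_norm (-z)
  have h3 := norm_add_le (Complex.exp z) (Complex.exp (-z))
  linarith

/-- The polynomial with the given bands. -/
noncomputable def dpoly (a b : Fin (g + 1) → ℝ) : ℝ[X] :=
  ∏ j : Fin (g + 1), (X - C (a j)) * (X - C (b j))

theorem sqp_sq_dpoly (z : ℂ) : sqp (ep a b) z ^ 2 = aeval z (dpoly a b) := by
  rw [sqp_sq, dpoly, map_prod, Fintype.prod_sum_type, ← Finset.prod_mul_distrib]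
  refine Finset.prod_congr rfl fun j _ => ?_
  simp [ep]

theorem dpoly_coprime (h : Bands a b) : IsCoprime (dpoly a b) (rpoly a b) := by
  have key : ∀ c : ℝ, (rpoly a b).eval c ≠ 0 → IsCoprime (X - C c) (rpoly a b) := by
    intro c hc
    rw [(irreducible_X_sub_C c).coprime_iff_not_dvd, dvd_iff_isRoot]
    exact hc
  refine IsCoprime.prod_left fun j _ => IsCoprime.mul_left (key _ ?_) (key _ ?_)
  · exact rpoly_band_ne_zero h j ⟨le_rfl, (h.lt j).le⟩
  · exact rpoly_band_ne_zero h j ⟨(h.lt j).le, le_rfl⟩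

/-- If `n` times every harmonic measure is an integer, then `cosh (n Θ)` is a polynomial `P`: on the
axis it is real, since `Re Θ = 0` on the bands and `n Im Θ` is a multiple of `π` off them. -/
theorem exists_cosh_poly (h : Bands a b) {Θ : ℂ → ℂ} (hΘ : Green a b Θ) (n : ℕ)
    (hn : ∀ k, ∃ m : ℤ, n * hm a b k = m) :
    ∃ P : ℝ[X], ∀ z : ℂ, 0 ≤ z.im → Complex.cosh (n * Θ z) = aeval z P := by
  have hab : ∀ k, (∃ m : ℤ, n * (Θ (b k)).im = m * Real.pi) →
      ∃ m : ℤ, n * (Θ (a k)).im = m * Real.pi := by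
    rintro k ⟨m, hm1⟩
    obtain ⟨m', hm'⟩ := hn k
    have := hΘ.im_band k
    refine ⟨m + m', ?_⟩
    push_cast
    rw [← hm']
    linear_combination n * this + hm1
  have hb : ∀ k, ∃ m : ℤ, n * (Θ (b k)).im = m * Real.pi := by
    intro k
    induction k using Fin.reverseInduction with
    | last => exact ⟨0, by rw [hΘ.im_right _ le_rfl]; simp⟩
    | cast i ih =>
      rw [hΘ.im_gap i _ ⟨le_rfl, (h.gap _ _ Fin.castSucc_lt_succ).le⟩]
      exact hab _ ih
  have hcosh : ∀ z : ℂ, (Complex.cosh z).im = Real.sinh z.re * Real.sin z.im := by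
    intro z
    conv_lhs => rw [← Complex.re_add_im z, Complex.cosh_add, Complex.cosh_mul_I, Complex.sinh_mul_I]
    simp [← Complex.ofReal_cosh, ← Complex.ofReal_sinh, ← Complex.ofReal_cos, ← Complex.ofReal_sin]
  have hInt : ∀ x : ℝ, (∃ m : ℤ, n * (Θ x).im = m * Real.pi) → (Complex.cosh (n * Θ x)).im = 0 := by
    rintro x ⟨m, hm1⟩
    rw [hcosh, show ((n : ℂ) * Θ x).im = n * (Θ x).im by simp, hm1, Real.sin_int_mul_pi, mul_zero]
  obtain ⟨A, hA0, hA⟩ := theta_growth (ep a b) g card_ep (rpoly a b) (rpoly_monic a b)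
    (rpoly_natDegree a b) Θ hΘ.cont hΘ.deriv
  refine real_polynomial_of_upper (fun z => Complex.cosh (n * Θ z)) ?_ ?_ ?_
    (Real.exp (n * A)) (2 * n) ?_
  · exact Complex.continuous_cosh.comp_continuousOn (continuousOn_const.mul hΘ.cont)
  · intro z hz
    exact (((hΘ.deriv z hz).const_mul (n : ℂ)).ccosh).differentiableAt.differentiableWithinAt
  · intro x
    rcases real_cover a b x with hx | hx | ⟨k, hx⟩ | ⟨i, hx⟩
    · refine hInt x ?_
      rw [(hΘ.im_left x hx).trans (hΘ.im_left (a 0) le_rfl).symm]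
      exact hab 0 (hb 0)
    · exact hInt x ⟨0, by rw [hΘ.im_right x hx]; simp⟩
    · rw [hcosh, show ((n : ℂ) * Θ x).re = n * (Θ x).re by simp, hΘ.re_band k x hx]
      simp
    · refine hInt x ?_
      rw [hΘ.im_gap i x hx]
      exact hab _ (hb _)
  · intro z hz
    refine (norm_cosh_le _).trans ?_
    have hpos : 0 < 1 + ‖z‖ := by positivity
    have h1 : ‖(n : ℂ) * Θ z‖ ≤ n * A + (2 * n : ℕ) * Real.log (1 + ‖z‖) := by
      rw [norm_mul, Complex.norm_natCast]
      have := mul_le_mul_of_nonneg_left (hA z hz) (Nat.cast_nonneg n)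
      push_cast
      linarith
    refine (Real.exp_le_exp.mpr h1).trans_eq ?_
    rw [Real.exp_add, mul_comm ((2 * n : ℕ) : ℝ), Real.exp_mul (Real.log _), Real.exp_log hpos,
      Real.rpow_natCast]

/-- With `n` a common denominator, `P = cosh (n Θ)` satisfies `D P'² = n² r² (P² - 1)`. Since `D` is
coprime to `r`, it divides `P² - 1`, and the cofactor is the square of `P' / (n r)`. -/
theorem pell_of_rational (h : Bands a b) (hq : ∀ k, ∃ q : ℚ, hm a b k = q) :
    ∃ P Q : ℝ[X], ∃ c : ℝ, 0 < P.natDegree ∧ Q ≠ 0 ∧ c ≠ 0 ∧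
      P ^ 2 - dpoly a b * Q ^ 2 = C c := by
  choose q hq using hq
  set n : ℕ := ∏ k, (q k).den with hnd
  have hn0 : n ≠ 0 := Finset.prod_ne_zero_iff.mpr fun k _ => (q k).den_ne_zero
  have hnR : (n : ℝ) ≠ 0 := by exact_mod_cast hn0
  have hn : ∀ k, ∃ m : ℤ, n * hm a b k = m := by
    intro k
    obtain ⟨d, hd⟩ : (q k).den ∣ n := Finset.dvd_prod_of_mem _ (Finset.mem_univ k)
    refine ⟨d * (q k).num, ?_⟩
    rw [hq, hd]
    have h1 : ((q k : ℚ) : ℝ) * ((q k).den : ℝ) = (q k).num := by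
      exact_mod_cast Rat.mul_den_eq_num (q k)
    push_cast
    linear_combination (d : ℝ) * h1
  obtain ⟨Θ, hΘ⟩ := exists_green h
  obtain ⟨P, hP⟩ := exists_cosh_poly h hΘ n hn
  have hopen : IsOpen {z : ℂ | 0 < z.im} := isOpen_lt continuous_const Complex.continuous_im
  have hid : dpoly a b * derivative P ^ 2 =
      C ((n : ℝ) ^ 2) * rpoly a b ^ 2 * (P ^ 2 - 1) := by
    rw [← sub_eq_zero]
    refine poly_eq_zero_of_upper _ fun z hz => ?_
    have h1 : HasDerivAt (fun z => Complex.cosh (n * Θ z)) (aeval z (derivative P)) z := by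
      refine (P.hasDerivAt_aeval z).congr_of_eventuallyEq ?_
      filter_upwards [hopen.mem_nhds hz] with w hw using hP w (le_of_lt hw)
    have h2 := ((hΘ.deriv z hz).const_mul (n : ℂ)).ccosh
    have h3 := h1.unique h2
    have h4 := hP z (le_of_lt hz)
    have h5 : sqp (ep a b) z ≠ 0 := sqp_ne_zero _ (ne_of_im_pos _ hz)
    have h6 := Complex.cosh_sq (n * Θ z)
    simp only [map_sub, map_mul, map_pow, map_one, aeval_C]
    rw [← sqp_sq_dpoly, h3, ← h4, vdiff, h6]
    field_simp
    simp
  have hdvd : dpoly a b ∣ P ^ 2 - 1 := by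
    have h1 : IsCoprime (dpoly a b) (C ((n : ℝ) ^ 2) * rpoly a b ^ 2) := by
      rw [isCoprime_mul_unit_left_right
        (isUnit_C.mpr (isUnit_iff_ne_zero.mpr (pow_ne_zero 2 hnR)))]
      exact (dpoly_coprime h).pow_right
    refine h1.dvd_of_dvd_mul_left ?_
    rw [← hid]
    exact dvd_mul_right _ _
  obtain ⟨K, hK⟩ := hdvd
  have hD0 : dpoly a b ≠ 0 := by
    refine Finset.prod_ne_zero_iff.mpr fun j _ => mul_ne_zero ?_ ?_ <;> exact X_sub_C_ne_zero _
  have hr0 : rpoly a b ≠ 0 := (rpoly_monic a b).ne_zero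
  have hsq : derivative P ^ 2 = C ((n : ℝ) ^ 2) * rpoly a b ^ 2 * K := by
    refine mul_left_cancel₀ hD0 ?_
    rw [hid, hK]; ring
  obtain ⟨S, hS⟩ : rpoly a b ∣ derivative P := by
    refine (UniqueFactorizationMonoid.pow_dvd_pow_iff_dvd two_ne_zero).mp ?_
    rw [hsq]
    exact Dvd.intro_left (C ((n : ℝ) ^ 2) * K) (by ring)
  have hSK : S ^ 2 = C ((n : ℝ) ^ 2) * K := by
    refine mul_left_cancel₀ (pow_ne_zero 2 hr0) ?_
    rw [← mul_pow, ← hS, hsq]; ring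
  have hdeg : 0 < P.natDegree := by
    by_contra! hd
    rw [Nat.le_zero, natDegree_eq_zero] at hd
    obtain ⟨c, hc⟩ := hd
    set B := b (Fin.last g)
    have h1 := hP (B : ℝ) (by simp)
    have h2 := hP ((B + 1 : ℝ) : ℂ) (by rw [Complex.ofReal_im])
    have h3 : Θ (B : ℝ) = 0 := Complex.ext (hΘ.re_band (Fin.last g) _ ⟨(h.lt _).le, le_rfl⟩)
      (hΘ.im_right _ le_rfl)
    have h4 : Θ ((B + 1 : ℝ) : ℂ) = ((Θ ((B + 1 : ℝ) : ℂ)).re : ℝ) :=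
      Complex.ext (by simp) (by rw [hΘ.im_right _ (by simp [B])]; simp)
    have h5 := hΘ.re_right (B + 1) (by simp [B])
    rw [← hc, aeval_C] at h1 h2
    rw [← h1, h3, mul_zero, Complex.cosh_zero, h4] at h2
    have h6 : Real.cosh (n * (Θ ((B + 1 : ℝ) : ℂ)).re) = 1 := by exact_mod_cast h2
    have h7 := Real.one_lt_cosh.mpr (mul_ne_zero hnR h5.ne')
    linarith
  have hPell : P ^ 2 - dpoly a b * (C ((n : ℝ)⁻¹) * S) ^ 2 = C 1 := by
    have h1 : (C ((n : ℝ)⁻¹) * S) ^ 2 = K := by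
      rw [mul_pow, hSK, ← C_pow, ← mul_assoc, ← C_mul, ← mul_pow, inv_mul_cancel₀ hnR]
      simp
    rw [h1, ← hK]; simp
  refine ⟨P, C ((n : ℝ)⁻¹) * S, 1, hdeg, ?_, one_ne_zero, hPell⟩
  intro h0
  rw [h0] at hPell
  have h1 := congrArg natDegree hPell
  rw [natDegree_C] at h1
  simp at h1
  omega

end

/-! ### A minimum principle with mixed boundary conditions -/

/-- Reflection across the real axis: if `Re h` has a minimum over the closed upper half-plane at a
real point near which `Im h` is constant on the axis, then the minimum is also attained inside the
half-plane. -/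
theorem min_interior_of_real (h : ℂ → ℂ) (hc : ContinuousOn h {z | 0 ≤ z.im})
    (hd : DifferentiableOn ℂ h {z | 0 < z.im}) (x : ℝ) (ρ : ℝ) (hρ : 0 < ρ)
    (him : ∀ y : ℝ, |y - x| < ρ → (h y).im = (h x).im)
    (hmin : ∀ z : ℂ, 0 ≤ z.im → (h x).re ≤ (h z).re) :
    ∃ z : ℂ, 0 < z.im ∧ (h z).re = (h x).re := by
  classical
  set c : ℝ := (h x).im with hcdef
  let W : ℂ → ℂ := fun z => Complex.exp (-(h z - Complex.I * c))
  have hWnorm : ∀ z, ‖W z‖ = Real.exp (-(h z).re) := by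
    intro z
    simp [W, Complex.norm_exp]
  have hWc : ContinuousOn W {z | 0 ≤ z.im} :=
    Complex.continuous_exp.comp_continuousOn (hc.sub continuousOn_const).neg
  have hWd : DifferentiableOn ℂ W {z | 0 < z.im} := ((hd.sub_const _).neg).cexp
  have hWreal : ∀ y : ℝ, |y - x| < ρ → (W y).im = 0 := by
    intro y hy
    have : h y - Complex.I * c = ((h y).re : ℝ) :=
      Complex.ext (by simp) (by simp [him y hy])
    simp only [W]
    rw [this, ← Complex.ofReal_neg, ← Complex.ofReal_exp, Complex.ofReal_im]
  let V : ℂ → ℂ := fun z => if 0 ≤ z.im then W z else star (W (star z))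
  have hVc : ContinuousOn V (Metric.ball (x : ℂ) ρ) := by
    refine ContinuousOn.if ?_ ?_ ?_
    · rintro z ⟨hz, hz'⟩
      have hz0 : z.im = 0 := by
        have := frontier_le_subset_eq continuous_const Complex.continuous_im hz'
        exact this.symm
      have hzr : z = (z.re : ℂ) := Complex.ext (by simp) (by simp [hz0])
      rw [hzr]
      simp only [Complex.star_def, Complex.conj_ofReal]
      refine (Complex.conj_eq_iff_im.mpr (hWreal _ ?_)).symm
      rw [hzr, Metric.mem_ball, Complex.dist_eq, ← Complex.ofReal_sub, Complex.norm_real] at hz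
      simpa using hz
    · refine hWc.mono fun z hz => ?_
      have := hz.2
      rwa [IsClosed.closure_eq (isClosed_le continuous_const Complex.continuous_im)] at this
    · refine ContinuousOn.mono (s := {z | z.im ≤ 0}) ?_ fun z hz => ?_
      · refine continuous_star.comp_continuousOn (hWc.comp continuous_star.continuousOn ?_)
        intro z hz
        have : z.im ≤ 0 := hz
        simpa using this
      · have h1 : closure {z : ℂ | ¬ 0 ≤ z.im} ⊆ {z | z.im ≤ 0} :=
          closure_minimal (fun z hz => (not_le.mp hz).le)
            (isClosed_le Complex.continuous_im continuous_const)
        exact h1 hz.2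
  have hVd : DifferentiableOn ℂ V (Metric.ball (x : ℂ) ρ) := by
    refine differentiableOn_ball_of_off_real V x ρ hVc ?_
    intro z _ hz
    rcases lt_or_gt_of_ne hz with h | h
    · have h1 : DifferentiableAt ℂ W (star z) := hWd.differentiableAt
        ((isOpen_lt continuous_const Complex.continuous_im).mem_nhds (by simpa using h))
      have h2 : DifferentiableAt ℂ (star ∘ W ∘ star) z := by
        have := h1.star_star
        simpa using this
      refine h2.congr_of_eventuallyEq ?_
      filter_upwards [(isOpen_lt Complex.continuous_im continuous_const).mem_nhds h] with w hw
      have : ¬ (0 ≤ w.im) := not_le.mpr hw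
      simp [V, this]
    · have h1 : DifferentiableAt ℂ W z := hWd.differentiableAt
        ((isOpen_lt continuous_const Complex.continuous_im).mem_nhds h)
      refine h1.congr_of_eventuallyEq ?_
      filter_upwards [(isOpen_lt continuous_const Complex.continuous_im).mem_nhds h] with w hw
      have : (0 ≤ w.im) := le_of_lt hw
      simp [V, this]
  have hVx : V x = W x := by simp [V]
  have hmax : IsMaxOn (norm ∘ V) (Metric.ball (x : ℂ) ρ) x := by
    intro z _
    change ‖V z‖ ≤ ‖V x‖
    rw [hVx, hWnorm]
    by_cases hz : 0 ≤ z.im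
    · simp only [V, hz, if_true]
      rw [hWnorm]
      exact Real.exp_le_exp.mpr (neg_le_neg (hmin z hz))
    · simp only [V, hz, if_false]
      rw [norm_star, hWnorm]
      refine Real.exp_le_exp.mpr (neg_le_neg (hmin _ ?_))
      simp at hz ⊢
      exact hz.le
  have hconst := Complex.norm_eqOn_of_isPreconnected_of_isMaxOn
    (convex_ball (x : ℂ) ρ).isPreconnected Metric.isOpen_ball hVd (Metric.mem_ball_self hρ) hmax
  refine ⟨x + (ρ / 2 : ℝ) * Complex.I, by simp; positivity, ?_⟩
  have h1 := hconst (x := x + (ρ / 2 : ℝ) * Complex.I) (by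
    rw [Metric.mem_ball, dist_eq_norm, add_sub_cancel_left, norm_mul, Complex.norm_I, mul_one,
      Complex.norm_real, Real.norm_eq_abs, abs_of_pos (by positivity)]
    linarith)
  simp only [Function.comp_apply, Function.const_apply] at h1
  rw [hVx, show V (x + (ρ / 2 : ℝ) * Complex.I) = W (x + (ρ / 2 : ℝ) * Complex.I) by
    have : (0 : ℝ) ≤ ((x : ℂ) + (ρ / 2 : ℝ) * Complex.I).im := by simp; positivity
    simp only [V, this, if_true], hWnorm, hWnorm] at h1
  have := Real.exp_injective h1
  linarith

/-- Minimum principle on the upper half-plane with mixed boundary conditions: `Re h ≥ 0` on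
`K ⊆ ℝ`, a Neumann condition on `ℝ \ K`, and `Re h` growing along rays. -/
theorem re_nonneg_of_mixed (h : ℂ → ℂ) (hc : ContinuousOn h {z | 0 ≤ z.im})
    (hd : DifferentiableOn ℂ h {z | 0 < z.im}) (K : Set ℝ) (hK : K.Nonempty)
    (hre : ∀ x ∈ K, 0 ≤ (h x).re)
    (him : ∀ x : ℝ, x ∉ K → ∃ ρ > 0, ∀ y : ℝ, |y - x| < ρ → (h y).im = (h x).im)
    (T : ℝ) (hT : 0 < T)
    (hray : ∀ z : ℂ, 0 < z.im → T ≤ ‖z‖ → (h ((T / ‖z‖ : ℝ) * z)).re ≤ (h z).re) :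
    ∀ z : ℂ, 0 ≤ z.im → 0 ≤ (h z).re := by
  have hKc : IsCompact (Metric.closedBall (0 : ℂ) T ∩ {z | 0 ≤ z.im}) :=
    (isCompact_closedBall _ _).inter_right (isClosed_le continuous_const Complex.continuous_im)
  obtain ⟨z₀, hz₀, hmin₀⟩ := hKc.exists_isMinOn (f := fun z => (h z).re)
    ⟨0, by simp [hT.le]⟩ (Complex.continuous_re.comp_continuousOn (hc.mono inter_subset_right))
  have hlim : ∀ x : ℝ, Filter.Tendsto (fun y : ℝ => (h (x + y * Complex.I)).re)
      (nhdsWithin 0 (Ioi 0)) (nhds (h x).re) := fun x =>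
    Complex.continuous_re.continuousAt.tendsto.comp
      ((hc x (by simp)).tendsto.comp (tendsto_vert x))
  have hmin' : ∀ z : ℂ, 0 < z.im → (h z₀).re ≤ (h z).re := by
    intro z hz
    rcases le_total ‖z‖ T with hzT | hzT
    · exact hmin₀ ⟨by simpa using hzT, hz.le⟩
    · refine le_trans (hmin₀ ⟨?_, ?_⟩) (hray z hz hzT)
      · have : 0 < ‖z‖ := hT.trans_le hzT
        rw [mem_closedBall_zero_iff, norm_mul, Complex.norm_real, Real.norm_eq_abs,
          abs_of_pos (by positivity)]
        field_simp
        exact le_rfl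
      · have : 0 ≤ T / ‖z‖ * z.im := by positivity
        rwa [mem_ofPred_eq, Complex.im_ofReal_mul]
  have hmin : ∀ z : ℂ, 0 ≤ z.im → (h z₀).re ≤ (h z).re := by
    intro z hz
    rcases hz.lt_or_eq with h0 | h0
    · exact hmin' z h0
    · have hzr : z = (z.re : ℂ) := Complex.ext (by simp) (by simp [← h0])
      rw [hzr]
      refine ge_of_tendsto (hlim z.re) ?_
      filter_upwards [self_mem_nhdsWithin] with y hy
      have hy0 : 0 < y := hy
      exact hmin' _ (by simpa using hy0)
  suffices hz : 0 ≤ (h z₀).re from fun z hz' => hz.trans (hmin z hz')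
  by_contra! hneg
  obtain ⟨z₁, hz₁, hz₁e⟩ : ∃ z₁ : ℂ, 0 < z₁.im ∧ (h z₁).re = (h z₀).re := by
    rcases (show 0 ≤ z₀.im from hz₀.2).lt_or_eq with h0 | h0
    · exact ⟨z₀, h0, rfl⟩
    · have hzr : z₀ = (z₀.re : ℂ) := Complex.ext (by simp) (by simp [← h0])
      have hnK : z₀.re ∉ K := fun hk => by
        have := hre _ hk
        rw [← hzr] at this
        linarith
      obtain ⟨ρ, hρ, hρi⟩ := him _ hnK
      have := min_interior_of_real h hc hd z₀.re ρ hρ hρi (by rw [← hzr]; exact hmin)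
      rwa [← hzr] at this
  -- the maximum modulus principle for `exp (-h)` makes `Re h` constant
  have hWnorm : ∀ z, ‖Complex.exp (-h z)‖ = Real.exp (-(h z).re) := by
    intro z
    simp [Complex.norm_exp]
  have hmax : IsMaxOn (norm ∘ fun z => Complex.exp (-h z)) {z | 0 < z.im} z₁ := by
    intro z hz
    change ‖Complex.exp (-h z)‖ ≤ ‖Complex.exp (-h z₁)‖
    rw [hWnorm, hWnorm, hz₁e]
    exact Real.exp_le_exp.mpr (neg_le_neg (hmin z (le_of_lt hz)))
  have hconst := Complex.norm_eqOn_of_isPreconnected_of_isMaxOn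
    (convex_halfSpace_im_gt 0).isPreconnected
    (isOpen_lt continuous_const Complex.continuous_im) hd.neg.cexp hz₁ hmax
  obtain ⟨x, hx⟩ := hK
  have h2 : (h x).re = (h z₀).re := by
    refine tendsto_nhds_unique (hlim x) (Filter.Tendsto.congr' ?_ tendsto_const_nhds)
    filter_upwards [self_mem_nhdsWithin] with y hy
    have hy0 : 0 < y := hy
    have h3 := hconst (x := (x : ℂ) + y * Complex.I) (by simpa using hy0)
    simp only [Function.comp_apply, Function.const_apply, Pi.neg_apply] at h3
    rw [hWnorm, hWnorm, hz₁e] at h3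
    have := Real.exp_injective h3
    linarith
  have := hre x hx
  linarith

/-! ### Monotonicity of harmonic measure -/

section
variable {g : ℕ} {a b b' : Fin (g + 1) → ℝ}

open Filter Topology in
/-- The Green function decreases when the bands are enlarged to the right. -/
theorem green_mono (h' : Bands a b') (hbb : ∀ k, b k ≤ b' k)
    (hlast : b (Fin.last g) = b' (Fin.last g)) {Θ Θ' : ℂ → ℂ} (hΘ : Green a b Θ)
    (hΘ' : Green a b' Θ') (z : ℂ) (hz : 0 ≤ z.im) : (Θ' z).re ≤ (Θ z).re := by
  -- the factor `1 + ε` makes the difference of Green functions grow at infinity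
  have key : ∀ ε : ℝ, 0 < ε → 0 ≤ ((1 + ε : ℝ) * Θ z - Θ' z).re := by
    intro ε hε
    have hη : 0 < ε / (2 + ε) := by positivity
    obtain ⟨T₁, hT₁0, hT₁⟩ := vdiff_asymp (ep a b) g card_ep (rpoly a b) (rpoly_monic a b)
      (rpoly_natDegree a b) _ hη
    obtain ⟨T₂, hT₂0, hT₂⟩ := vdiff_asymp (ep a b') g card_ep (rpoly a b') (rpoly_monic a b')
      (rpoly_natDegree a b') _ hη
    have hder : ∀ w : ℂ, 0 < w.im → HasDerivAt (fun w => ((1 + ε : ℝ) : ℂ) * Θ w - Θ' w)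
        ((1 + ε : ℝ) * vdiff (ep a b) (rpoly a b) w - vdiff (ep a b') (rpoly a b') w) w :=
      fun w hw => ((hΘ.deriv w hw).const_mul _).sub (hΘ'.deriv w hw)
    refine re_nonneg_of_mixed (fun w => ((1 + ε : ℝ) : ℂ) * Θ w - Θ' w)
      ((continuousOn_const.mul hΘ.cont).sub hΘ'.cont)
      (fun w hw => (hder w hw).differentiableAt.differentiableWithinAt)
      (⋃ k, Icc (a k) (b' k)) ⟨a 0, mem_iUnion.mpr ⟨0, le_rfl, (h'.lt 0).le⟩⟩ ?_ ?_
      (max T₁ T₂) (lt_max_of_lt_left hT₁0) ?_ z hz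
    · intro x hx
      obtain ⟨k, hk⟩ := mem_iUnion.mp hx
      have h0 : 0 ≤ (Θ x).re := by
        rcases le_or_gt x (b k) with hxb | hxb
        · exact (hΘ.re_band k x ⟨hk.1, hxb⟩).ge
        · rcases Fin.eq_castSucc_or_eq_last k with ⟨i, rfl⟩ | rfl
          · exact hΘ.re_gap i x ⟨hxb.le, hk.2.trans (h'.gap _ _ Fin.castSucc_lt_succ).le⟩
          · rw [hlast] at hxb
            exact absurd hk.2 (not_le.mpr hxb)
      rw [Complex.sub_re, Complex.re_ofReal_mul, hΘ'.re_band k x hk]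
      have : 0 < 1 + ε := by linarith
      simpa using mul_nonneg this.le h0
    · intro x hx
      have hxk : ∀ k, x ∉ Icc (a k) (b' k) := fun k hk => hx (mem_iUnion.mpr ⟨k, hk⟩)
      -- it suffices that both imaginary parts are constant on an open interval around `x`
      have red : ∀ s : Set ℝ, IsOpen s → x ∈ s → (∀ y ∈ s, (Θ y).im = (Θ x).im) →
          (∀ y ∈ s, (Θ' y).im = (Θ' x).im) → ∃ ρ > 0, ∀ y : ℝ, |y - x| < ρ →
          (((1 + ε : ℝ) : ℂ) * Θ y - Θ' y).im = (((1 + ε : ℝ) : ℂ) * Θ x - Θ' x).im := by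
        intro s hs hxs h1 h2
        obtain ⟨ρ, hρ, hρs⟩ := Metric.isOpen_iff.mp hs x hxs
        refine ⟨ρ, hρ, fun y hy => ?_⟩
        have hys : y ∈ s := hρs (by rwa [Metric.mem_ball, Real.dist_eq])
        rw [Complex.sub_im, Complex.sub_im, Complex.im_ofReal_mul, Complex.im_ofReal_mul,
          h1 y hys, h2 y hys]
      rcases real_cover a b' x with hx0 | hx0 | ⟨k, hk⟩ | ⟨i, hi⟩
      · have hlt : x < a 0 := lt_of_le_of_ne hx0 fun he => hxk 0 (by
          rw [he]; exact ⟨le_rfl, (h'.lt 0).le⟩)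
        refine red (Iio (a 0)) isOpen_Iio hlt (fun y hy => ?_) (fun y hy => ?_)
        · rw [hΘ.im_left y (le_of_lt hy), hΘ.im_left x hx0]
        · rw [hΘ'.im_left y (le_of_lt hy), hΘ'.im_left x hx0]
      · have hlt : b' (Fin.last g) < x := lt_of_le_of_ne hx0 fun he => hxk (Fin.last g) (by
          rw [← he]; exact ⟨(h'.lt _).le, le_rfl⟩)
        refine red (Ioi (b' (Fin.last g))) isOpen_Ioi hlt (fun y hy => ?_) (fun y hy => ?_)
        · rw [hΘ.im_right y (hlast.trans_le (le_of_lt hy)), hΘ.im_right x (hlast.trans_le hx0)]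
        · rw [hΘ'.im_right y (le_of_lt hy), hΘ'.im_right x hx0]
      · exact absurd hk (hxk k)
      · have hi1 : b' i.castSucc < x := lt_of_le_of_ne hi.1 fun he => hxk i.castSucc (by
          rw [← he]; exact ⟨(h'.lt _).le, le_rfl⟩)
        have hi2 : x < a i.succ := lt_of_le_of_ne hi.2 fun he => hxk i.succ (by
          rw [he]; exact ⟨le_rfl, (h'.lt _).le⟩)
        refine red (Ioo (b' i.castSucc) (a i.succ)) isOpen_Ioo ⟨hi1, hi2⟩ (fun y hy => ?_)
          (fun y hy => ?_)
        · rw [hΘ.im_gap i y ⟨(hbb _).trans hy.1.le, hy.2.le⟩,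
            hΘ.im_gap i x ⟨(hbb _).trans hi.1, hi.2⟩]
        · rw [hΘ'.im_gap i y ⟨hy.1.le, hy.2.le⟩, hΘ'.im_gap i x hi]
    · intro w hw hwT
      set T := max T₁ T₂ with hT
      have hT0 : 0 < T := lt_max_of_lt_left hT₁0
      have hw0 : 0 < ‖w‖ := hT0.trans_le hwT
      have hle : T / ‖w‖ ≤ 1 := (div_le_one hw0).mpr hwT
      have hs0 : 0 < T / ‖w‖ := by positivity
      have hd1 : ∀ s : ℝ, 0 < s → HasDerivAt
          (fun s : ℝ => (((1 + ε : ℝ) : ℂ) * Θ (s * w) - Θ' (s * w)).re)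
          ((((1 + ε : ℝ) * vdiff (ep a b) (rpoly a b) (s * w)
            - vdiff (ep a b') (rpoly a b') (s * w)) * w).re) s := by
        intro s hs
        have h1 := hder (s * w) (by rw [Complex.im_ofReal_mul]; positivity)
        have h2 : HasDerivAt (fun v : ℂ => v * w) w (s : ℂ) := hasDerivAt_mul_const w
        exact (h1.comp (s : ℂ) h2).real_of_complex
      have hmono : MonotoneOn (fun s : ℝ => (((1 + ε : ℝ) : ℂ) * Θ (s * w) - Θ' (s * w)).re)
          (Icc (T / ‖w‖) 1) := by
        refine monotoneOn_of_hasDerivWithinAt_nonneg (convex_Icc _ _)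
          (fun s hs => (hd1 s (hs0.trans_le hs.1)).continuousAt.continuousWithinAt)
          (fun s hs => (hd1 s (hs0.trans_le (interior_subset hs).1)).hasDerivWithinAt) ?_
        intro s hs
        have hs1 := interior_subset hs
        have hsp : 0 < s := hs0.trans_le hs1.1
        have him : 0 ≤ ((s : ℂ) * w).im := by rw [Complex.im_ofReal_mul]; positivity
        have hn : T ≤ ‖(s : ℂ) * w‖ := by
          rw [norm_mul, Complex.norm_real, Real.norm_eq_abs, abs_of_pos hsp]
          exact (div_le_iff₀ hw0).mp hs1.1
        have e1 := (Complex.abs_re_le_norm _).trans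
          (hT₁ _ him ((le_max_left _ _).trans hn))
        have e2 := (Complex.abs_re_le_norm _).trans
          (hT₂ _ him ((le_max_right _ _).trans hn))
        rw [Complex.sub_re, Complex.one_re] at e1 e2
        have e3 : s * (((1 + ε : ℝ) * vdiff (ep a b) (rpoly a b) (s * w)
            - vdiff (ep a b') (rpoly a b') (s * w)) * w).re =
            (1 + ε) * ((s : ℂ) * w * vdiff (ep a b) (rpoly a b) (s * w)).re -
            ((s : ℂ) * w * vdiff (ep a b') (rpoly a b') (s * w)).re := by
          rw [← Complex.re_ofReal_mul, ← Complex.re_ofReal_mul, ← Complex.sub_re]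
          congr 1; ring
        have e4 : ε / (2 + ε) * (2 + ε) = ε := by field_simp
        have e5 := (abs_le.mp e1).1
        have e6 := (abs_le.mp e2).2
        refine nonneg_of_mul_nonneg_right (a := s) ?_ hsp
        rw [e3]
        nlinarith
      have := hmono ⟨le_rfl, hle⟩ ⟨hle, le_rfl⟩ hle
      simpa using this
  have hlim : Tendsto (fun ε : ℝ => ((1 + ε : ℝ) * Θ z - Θ' z).re) (𝓝[>] 0)
      (𝓝 ((Θ z).re - (Θ' z).re)) := by
    have : Continuous fun ε : ℝ => (((1 + ε : ℝ) : ℂ) * Θ z - Θ' z).re := by fun_prop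
    have h3 := this.tendsto 0
    simp only [add_zero, Complex.ofReal_one, one_mul, Complex.sub_re] at h3
    exact h3.mono_left nhdsWithin_le_nhds
  have := ge_of_tendsto hlim (by filter_upwards [self_mem_nhdsWithin] with ε hε using key ε hε)
  linarith

open Filter Topology in
/-- On a common band, the density of harmonic measure is the normal derivative of the Green
function, hence it decreases as well. -/
theorem density_mono (h : Bands a b) (h' : Bands a b') (hbb : ∀ k, b k ≤ b' k)
    (hlast : b (Fin.last g) = b' (Fin.last g)) (j : Fin (g + 1)) (hj : b j = b' j) (x : ℝ)
    (hx : x ∈ Ioo (a j) (b j)) :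
    |(rpoly a b').eval x| / wt a b' x ≤ |(rpoly a b).eval x| / wt a b x := by
  obtain ⟨Θ, hΘ⟩ := exists_green h
  obtain ⟨Θ', hΘ'⟩ := exists_green h'
  set u : ℝ → ℝ := fun y => (Θ (x + y * Complex.I) - Θ' (x + y * Complex.I)).re with hu
  set v : ℝ → ℝ := fun y => ((vdiff (ep a b) (rpoly a b) (x + y * Complex.I) -
    vdiff (ep a b') (rpoly a b') (x + y * Complex.I)) * Complex.I).re with hv
  have hx' : x ∈ Icc (a j) (b j) := Ioo_subset_Icc_self hx
  have hx'' : x ∈ Icc (a j) (b' j) := by rw [← hj]; exact hx'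
  have hu0 : u 0 = 0 := by
    simp [hu, hΘ.re_band j x hx', hΘ'.re_band j x hx'']
  have hun : ∀ y, 0 ≤ y → 0 ≤ u y := by
    intro y hy
    have := green_mono h' hbb hlast hΘ hΘ' (x + y * Complex.I) (by simpa using hy)
    simp only [hu, Complex.sub_re]
    linarith
  have hder : ∀ y : ℝ, 0 < y → HasDerivAt u (v y) y := by
    intro y hy
    have him : 0 < ((x : ℂ) + (y : ℂ) * Complex.I).im := by simpa using hy
    have h1 := (hΘ.deriv _ him).sub (hΘ'.deriv _ him)
    have h2 : HasDerivAt (fun w : ℂ => (x : ℂ) + w * Complex.I) Complex.I (y : ℂ) :=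
      (hasDerivAt_mul_const Complex.I).const_add _
    exact (h1.comp (y : ℂ) h2).real_of_complex
  have hne : ∀ i, x ≠ ep a b i := by
    intro i hi
    have := wt_pos_band h j hx
    have h2 : wt a b x = 0 := by
      refine Finset.prod_eq_zero_iff.mpr ?_
      rcases i with i | i
      · exact ⟨i, Finset.mem_univ _, by simp [hi, ep]⟩
      · exact ⟨i, Finset.mem_univ _, by simp [hi, ep]⟩
    linarith
  have hne' : ∀ i, x ≠ ep a b' i := by
    intro i hi
    have := wt_pos_band h' j (x := x) (by rw [← hj]; exact hx)
    have h2 : wt a b' x = 0 := by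
      refine Finset.prod_eq_zero_iff.mpr ?_
      rcases i with i | i
      · exact ⟨i, Finset.mem_univ _, by simp [hi, ep]⟩
      · exact ⟨i, Finset.mem_univ _, by simp [hi, ep]⟩
    linarith
  have hvlim : Tendsto v (𝓝[>] 0)
      (𝓝 (|(rpoly a b).eval x| / wt a b x - |(rpoly a b').eval x| / wt a b' x)) := by
    have h1 := (((vdiff_tendsto (ep a b) (rpoly a b) hne).sub
      (vdiff_tendsto (ep a b') (rpoly a b') hne')).mul_const Complex.I)
    have h2 := Complex.continuous_re.continuousAt.tendsto.comp h1
    rw [vdiff_band h j hx', vdiff_band h' j hx''] at h2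
    refine h2.congr' (by rfl) |>.trans_eq ?_
    congr 1
    simp
    ring
  have hud : HasDerivWithinAt u (|(rpoly a b).eval x| / wt a b x -
      |(rpoly a b').eval x| / wt a b' x) (Ici 0) 0 := by
    refine hasDerivWithinAt_Ici_of_tendsto_deriv (s := Ioi 0)
      (fun y hy => (hder y hy).differentiableAt.differentiableWithinAt) ?_ self_mem_nhdsWithin ?_
    · have h1 := ((hΘ.cont x (by simp)).sub (hΘ'.cont x (by simp))).tendsto.comp (tendsto_vert x)
      have h2 := Complex.continuous_re.continuousAt.tendsto.comp h1
      have e : u 0 = ((Θ - Θ') (x : ℂ)).re := by simp [hu]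
      rw [ContinuousWithinAt, e]
      exact h2
    · refine hvlim.congr' ?_
      filter_upwards [self_mem_nhdsWithin] with y hy using (hder y hy).deriv.symm
  have hsl := (hasDerivWithinAt_iff_tendsto_slope' (by simp)).mp
    (hud.mono Ioi_subset_Ici_self)
  have := ge_of_tendsto hsl (b := 0) (by
    filter_upwards [self_mem_nhdsWithin] with y hy
    have hy0 : 0 < y := hy
    rw [slope_def_field, hu0, sub_zero, sub_zero]
    exact div_nonneg (hun y hy0.le) hy0.le)
  linarith

theorem abs_div_wt_intervalIntegrable (h : Bands a b) (x y : ℝ) :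
    IntervalIntegrable (fun t => |(rpoly a b).eval t| / wt a b t) volume x y := by
  have := (vdiff_intervalIntegrable h (rpoly a b) x y).norm
  simpa only [norm_vdiff_ofReal] using this

/-- Enlarging some bands to the right, with the last right endpoint fixed, does not increase the
harmonic measure of a band that is left unchanged. -/
theorem hm_mono (h : Bands a b) (h' : Bands a b') (hbb : ∀ k, b k ≤ b' k)
    (hlast : b (Fin.last g) = b' (Fin.last g)) (j : Fin (g + 1)) (hj : b j = b' j) :
    hm a b' j ≤ hm a b j := by
  have := intervalIntegral.integral_mono_on_of_le_Ioo (h.lt j).le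
    (abs_div_wt_intervalIntegrable h' (a j) (b j)) (abs_div_wt_intervalIntegrable h (a j) (b j))
    (density_mono h h' hbb hlast j hj)
  rw [hm, hm, ← hj]
  exact div_le_div_of_nonneg_right this Real.pi_pos.le

theorem dpoly_eval_band (h : Bands a b) (k : Fin (g + 1)) {x : ℝ} (hx : x ∈ Icc (a k) (b k)) :
    (dpoly a b).eval x = -wt a b x ^ 2 := by
  have h1 := sqp_sq_dpoly (a := a) (b := b) (x : ℂ)
  rw [sqp_band h k hx, aeval_ofReal', mul_pow, Complex.I_sq] at h1
  have h2 : -(sg k * wt a b x) ^ 2 = (dpoly a b).eval x := by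
    have : ((-(sg k * wt a b x) ^ 2 : ℝ) : ℂ) = (((dpoly a b).eval x : ℝ) : ℂ) := by
      rw [← h1]; push_cast; ring
    exact_mod_cast this
  rw [← h2]
  linear_combination (-wt a b x ^ 2) * sg_sq k

/-- The harmonic measure of the last band strictly decreases under a genuine enlargement: equality
would make the two densities agree, so `r² D' = r'² D` as polynomials, and the endpoints would
coincide. -/
theorem hm_strict (h : Bands a b) (h' : Bands a b') (hbb : ∀ k, b k ≤ b' k)
    (hlast : b (Fin.last g) = b' (Fin.last g)) (hne : b ≠ b') :
    hm a b' (Fin.last g) < hm a b (Fin.last g) := by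
  set l := Fin.last g
  refine lt_of_le_of_ne (hm_mono h h' hbb hlast l hlast) fun heq => hne ?_
  set d : ℝ → ℝ := fun x => |(rpoly a b).eval x| / wt a b x - |(rpoly a b').eval x| / wt a b' x
    with hd
  have hI := abs_div_wt_intervalIntegrable h (a l) (b l)
  have hI' := abs_div_wt_intervalIntegrable h' (a l) (b l)
  have hInt : ∫ x in a l..b l, d x = 0 := by
    rw [hd, intervalIntegral.integral_sub hI hI', sub_eq_zero]
    rw [hm, hm, div_left_inj' Real.pi_ne_zero, ← hlast] at heq
    exact heq.symm
  have hnn : ∀ x ∈ Ioo (a l) (b l), 0 ≤ d x := fun x hx =>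
    sub_nonneg.mpr (density_mono h h' hbb hlast l hlast x hx)
  -- equality of the integrals forces equality of the densities
  have hzero : ∀ x ∈ Ioo (a l) (b l), d x = 0 := by
    have hae : ∀ᵐ x ∂(volume.restrict (Ioc (a l) (b l))), 0 ≤ d x := by
      rw [← restrict_Ioo_eq_restrict_Ioc]
      exact ae_restrict_of_forall_mem measurableSet_Ioo hnn
    have h0 := (intervalIntegral.integral_eq_zero_iff_of_le_of_nonneg_ae (h.lt l).le hae
      (hI.sub hI')).mp hInt
    rw [← restrict_Ioo_eq_restrict_Ioc] at h0
    refine Measure.eqOn_open_of_ae_eq h0 isOpen_Ioo ?_ continuousOn_const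
    have hc : ∀ p : ℝ[X], Continuous fun x => |p.eval x| := fun p => p.continuous.abs
    refine ((hc _).continuousOn.div wt_continuous.continuousOn fun x hx => ?_).sub
      ((hc _).continuousOn.div wt_continuous.continuousOn fun x hx => ?_)
    · exact (wt_pos_band h l hx).ne'
    · exact (wt_pos_band h' l (by rw [← hlast]; exact hx)).ne'
  have hpoly : rpoly a b ^ 2 * dpoly a b' = rpoly a b' ^ 2 * dpoly a b := by
    refine Polynomial.eq_of_infinite_eval_eq _ _ ((Ioo_infinite (h.lt l)).mono fun x hx => ?_)
    have hx1 : x ∈ Icc (a l) (b l) := Ioo_subset_Icc_self hx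
    have hx2 : x ∈ Icc (a l) (b' l) := by rw [← hlast]; exact hx1
    have hw1 : wt a b x ≠ 0 := (wt_pos_band h l hx).ne'
    have hw2 : wt a b' x ≠ 0 := (wt_pos_band h' l (by rw [← hlast]; exact hx)).ne'
    have h1 := sub_eq_zero.mp (hzero x hx)
    rw [div_eq_div_iff hw1 hw2] at h1
    rw [mem_ofPred_eq, eval_mul, eval_mul, eval_pow, eval_pow, dpoly_eval_band h l hx1,
      dpoly_eval_band h' l hx2, ← sq_abs ((rpoly a b).eval x), ← sq_abs ((rpoly a b').eval x)]
    linear_combination -(|(rpoly a b).eval x| * wt a b' x + |(rpoly a b').eval x| * wt a b x) * h1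
  funext k
  have h1 := congrArg (fun p => p.eval (b' k)) hpoly
  have h2 : (dpoly a b').eval (b' k) = 0 := by
    rw [dpoly, eval_prod]
    exact Finset.prod_eq_zero (Finset.mem_univ k) (by simp)
  simp only [eval_mul, eval_pow, h2, mul_zero] at h1
  have h3 : (dpoly a b).eval (b' k) = 0 := by
    refine (mul_eq_zero.mp h1.symm).resolve_left (pow_ne_zero 2 ?_)
    exact rpoly_band_ne_zero h' k ⟨(h'.lt k).le, le_rfl⟩
  rw [dpoly, eval_prod, Finset.prod_eq_zero_iff] at h3
  obtain ⟨i, -, hi⟩ := h3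
  simp only [eval_mul, eval_sub, eval_X, eval_C, mul_eq_zero, sub_eq_zero] at hi
  rcases hi with hi | hi
  · rcases le_or_gt i k with hik | hik
    · have := h'.a_mono hik
      have := h'.lt k
      linarith
    · have := h'.gap k i hik
      linarith
  · rcases lt_trichotomy i k with hik | hik | hik
    · have := h.gap i k hik
      have := h'.lt k
      linarith
    · rw [← hik, ← hi, hik]
    · have := h'.gap k i hik
      have := h.lt i
      linarith

end

/-! ### Continuity in the endpoints -/

section
variable {g : ℕ} {a : Fin (g + 1) → ℝ}

theorem wt_eq_prod_ep (a b : Fin (g + 1) → ℝ) (x : ℝ) :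
    wt a b x = ∏ e, √|x - ep a b e| := by
  rw [Fintype.prod_sum_type, ← Finset.prod_mul_distrib, wt]
  exact Finset.prod_congr rfl fun j _ => Real.sqrt_mul (abs_nonneg _) _

theorem arcsine_integrable :
    IntervalIntegrable (fun t : ℝ => (√(|t| * |t - 1|))⁻¹) volume 0 1 := by
  have h : Bands (g := 0) (fun _ => 0) (fun _ => 1) :=
    ⟨fun _ => one_pos, fun j k hjk => absurd hjk (by omega)⟩
  simpa [wt] using div_wt_intervalIntegrable h 1 0 1

theorem ep_continuous (a : Fin (g + 1) → ℝ) (e : Fin (g + 1) ⊕ Fin (g + 1)) :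
    Continuous fun b : Fin (g + 1) → ℝ => ep a b e := by
  rcases e with e | e
  · exact continuous_const
  · exact continuous_apply e

/-- Continuous dependence on `b` of a weighted integral between two adjacent endpoints. The affine
substitution `x = p + (q - p) t` moves the singularities of the integrand to the fixed weight
`1 / √(t (1 - t))`, after which dominated convergence applies. -/
theorem continuousOn_integral_div_wt {K : Set (Fin (g + 1) → ℝ)} (hK : IsCompact K)
    (e₁ e₂ : Fin (g + 1) ⊕ Fin (g + 1)) (hne : e₁ ≠ e₂)
    (hlt : ∀ b ∈ K, ep a b e₁ < ep a b e₂)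
    (hsep : ∀ b ∈ K, ∀ e, e ≠ e₁ → e ≠ e₂ → ep a b e ∉ Icc (ep a b e₁) (ep a b e₂))
    (f : (Fin (g + 1) → ℝ) → ℝ → ℝ) (hf : ContinuousOn (fun z : _ × ℝ => f z.1 z.2) (K ×ˢ univ)) :
    ContinuousOn (fun b => ∫ x in ep a b e₁..ep a b e₂, f b x / wt a b x) K := by
  set X : (Fin (g + 1) → ℝ) → ℝ → ℝ := fun b t => ep a b e₁ + (ep a b e₂ - ep a b e₁) * t with hX
  have hXc : Continuous fun z : _ × ℝ => X z.1 z.2 := by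
    have h1 := (ep_continuous a e₁).comp (continuous_fst (Y := ℝ))
    have h2 := (ep_continuous a e₂).comp (continuous_fst (Y := ℝ))
    exact h1.add ((h2.sub h1).mul continuous_snd)
  set W : (Fin (g + 1) → ℝ) → ℝ → ℝ :=
    fun b t => ∏ e ∈ ({e₁, e₂} : Finset _)ᶜ, √|X b t - ep a b e| with hW
  have hWc : Continuous fun z : _ × ℝ => W z.1 z.2 := by
    refine continuous_finsetProd _ fun e _ => Real.continuous_sqrt.comp ?_
    exact (hXc.sub ((ep_continuous a e).comp continuous_fst)).abs
  set G : (Fin (g + 1) → ℝ) → ℝ → ℝ := fun b t => f b (X b t) / W b t with hG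
  have hW0 : ∀ b ∈ K, ∀ t ∈ Icc (0 : ℝ) 1, W b t ≠ 0 := by
    intro b hb t ht
    refine Finset.prod_ne_zero_iff.mpr fun e he => ?_
    simp only [Finset.mem_compl, Finset.mem_insert, Finset.mem_singleton, not_or] at he
    have h1 := hsep b hb e he.1 he.2
    have h2 := hlt b hb
    have hXm : X b t ∈ Icc (ep a b e₁) (ep a b e₂) := by
      simp only [hX, mem_Icc]
      constructor <;> nlinarith [ht.1, ht.2]
    refine (Real.sqrt_pos.mpr (abs_pos.mpr (sub_ne_zero.mpr fun h => h1 ?_))).ne'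
    rw [← h]; exact hXm
  have hGc : ContinuousOn (fun z : _ × ℝ => G z.1 z.2) (K ×ˢ Icc (0 : ℝ) 1) := by
    refine ContinuousOn.div ?_ hWc.continuousOn fun z hz => hW0 z.1 hz.1 z.2 hz.2
    exact hf.comp (continuous_fst.prodMk hXc).continuousOn fun z hz => ⟨hz.1, mem_univ _⟩
  have heq : ∀ b ∈ K, ∫ x in ep a b e₁..ep a b e₂, f b x / wt a b x =
      ∫ t in (0 : ℝ)..1, G b t * (√(|t| * |t - 1|))⁻¹ := by
    intro b hb
    have hpos := sub_pos.mpr (hlt b hb)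
    have h1 := intervalIntegral.mul_integral_comp_add_mul (a := 0) (b := 1)
      (f := fun x => f b x / wt a b x) (c := ep a b e₂ - ep a b e₁) (d := ep a b e₁)
    rw [mul_zero, mul_one, add_zero, add_sub_cancel] at h1
    rw [← h1, ← intervalIntegral.integral_const_mul]
    congr 1
    funext t
    have h2 : wt a b (X b t) = (ep a b e₂ - ep a b e₁) * √(|t| * |t - 1|) * W b t := by
      rw [wt_eq_prod_ep, ← Finset.prod_mul_prod_compl {e₁, e₂}, Finset.prod_pair hne,
        ← Real.sqrt_mul (abs_nonneg _)]
      congr 1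
      have e1 : X b t - ep a b e₁ = (ep a b e₂ - ep a b e₁) * t := by simp [hX]
      have e2 : X b t - ep a b e₂ = (ep a b e₂ - ep a b e₁) * (t - 1) := by simp only [hX]; ring
      rw [e1, e2, abs_mul, abs_mul, abs_of_pos hpos,
        show (ep a b e₂ - ep a b e₁) * |t| * ((ep a b e₂ - ep a b e₁) * |t - 1|) =
          (ep a b e₂ - ep a b e₁) ^ 2 * (|t| * |t - 1|) by ring,
        Real.sqrt_mul (sq_nonneg _), Real.sqrt_sq hpos.le]
    change (ep a b e₂ - ep a b e₁) * (f b (X b t) / wt a b (X b t)) = _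
    rw [h2, hG, mul_assoc, ← mul_div_assoc, mul_div_mul_left _ _ hpos.ne', mul_comm (√_) (W b t),
      ← div_div, ← div_eq_mul_inv]
  refine ContinuousOn.congr ?_ heq
  obtain ⟨M, hM⟩ := (hK.prod isCompact_Icc).exists_bound_of_continuousOn hGc
  have hIoc : uIoc (0 : ℝ) 1 ⊆ Icc 0 1 := by
    rw [uIoc_of_le zero_le_one]; exact Ioc_subset_Icc_self
  have hGt : ∀ b ∈ K, ContinuousOn (G b) (Icc 0 1) := fun b hb =>
    hGc.comp (by fun_prop : Continuous fun t : ℝ => (b, t)).continuousOn fun t ht => ⟨hb, ht⟩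
  intro b₀ hb₀
  refine intervalIntegral.continuousWithinAt_of_dominated_interval
    (bound := fun t => M * (√(|t| * |t - 1|))⁻¹) ?_ ?_ (arcsine_integrable.const_mul M) ?_
  · filter_upwards [self_mem_nhdsWithin] with b hb
    refine AEStronglyMeasurable.mul ?_ ?_
    · exact ((hGt b hb).mono hIoc).aestronglyMeasurable measurableSet_uIoc
    · exact (Measurable.inv (by fun_prop)).aestronglyMeasurable
  · filter_upwards [self_mem_nhdsWithin] with b hb
    refine Filter.Eventually.of_forall fun t ht => ?_
    rw [norm_mul, Real.norm_of_nonneg (inv_nonneg.mpr (Real.sqrt_nonneg (|t| * |t - 1|)))]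
    exact mul_le_mul_of_nonneg_right (hM (b, t) ⟨hb, hIoc ht⟩)
      (inv_nonneg.mpr (Real.sqrt_nonneg _))
  · refine Filter.Eventually.of_forall fun t ht => ContinuousWithinAt.mul ?_
      continuousWithinAt_const
    exact (hGc.comp (by fun_prop : Continuous fun b : Fin (g + 1) → ℝ => (b, t)).continuousOn
      fun b hb => ⟨hb, hIoc ht⟩) b₀ hb₀

variable {K : Set (Fin (g + 1) → ℝ)}

theorem gapInt_continuousOn (hK : IsCompact K) (hB : ∀ b ∈ K, Bands a b) (i : Fin g) (m : ℕ) :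
    ContinuousOn (fun b => gapInt a b i m) K := by
  refine continuousOn_integral_div_wt hK (Sum.inr i.castSucc) (Sum.inl i.succ) (by simp)
    (fun b hb => (hB b hb).gap _ _ Fin.castSucc_lt_succ) ?_ (fun _ x => x ^ m) (by fun_prop)
  intro b hb e he₁ he₂ hmem
  have h := hB b hb
  rcases e with j | j
  · have h1 : b i.castSucc ≤ a j := hmem.1
    have h2 : a j ≤ a i.succ := hmem.2
    have hj : j ≠ i.succ := fun hj => he₂ (by rw [hj])
    rcases lt_or_gt_of_ne hj with hj | hj
    · have := h.a_mono (Fin.le_castSucc_iff.mpr hj)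
      have := h.lt i.castSucc
      linarith
    · have := h.gap _ _ hj
      have := h.lt i.succ
      linarith
  · have h1 : b i.castSucc ≤ b j := hmem.1
    have h2 : b j ≤ a i.succ := hmem.2
    have hj : j ≠ i.castSucc := fun hj => he₁ (by rw [hj])
    rcases lt_or_gt_of_ne hj with hj | hj
    · have := h.gap _ _ hj
      have := h.lt i.castSucc
      linarith
    · have := h.a_mono (Fin.castSucc_lt_iff_succ_le.mp hj)
      have := h.lt j
      linarith

theorem gapC_continuousOn (hK : IsCompact K) (hB : ∀ b ∈ K, Bands a b) :
    ContinuousOn (fun b => gapC a b) K := by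
  have hI : ∀ i m, Continuous fun b : K => gapInt a b.1 i m := fun i m =>
    continuousOn_iff_continuous_domRestrict.mp (gapInt_continuousOn hK hB i m)
  rw [continuousOn_iff_continuous_domRestrict]
  have hM : Continuous fun b : K => gapM a b.1 := continuous_matrix fun i m => hI i m
  have hinv : Continuous fun b : K => (gapM a b.1)⁻¹ := by
    simp only [Matrix.inv_def, Ring.inverse_eq_inv']
    exact (hM.matrix_det.inv₀ fun b => gapM_det (hB b.1 b.2)).smul hM.matrix_adjugate
  exact hinv.matrix_mulVec (continuous_pi fun i => hI i g)

theorem hm_continuousOn (hK : IsCompact K) (hB : ∀ b ∈ K, Bands a b) (k : Fin (g + 1)) :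
    ContinuousOn (fun b => hm a b k) K := by
  refine ContinuousOn.div_const ?_ _
  refine continuousOn_integral_div_wt hK (Sum.inl k) (Sum.inr k) (by simp)
    (fun b hb => (hB b hb).lt k) ?_ (fun b x => |(rpoly a b).eval x|) ?_
  · intro b hb e he₁ he₂ hmem
    have h := hB b hb
    rcases e with j | j
    · have h1 : a k ≤ a j := hmem.1
      have h2 : a j ≤ b k := hmem.2
      have hj : j ≠ k := fun hj => he₁ (by rw [hj])
      rcases lt_or_gt_of_ne hj with hj | hj
      · have := h.gap _ _ hj
        have := h.lt j
        linarith
      · have := h.gap _ _ hj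
        linarith
    · have h1 : a k ≤ b j := hmem.1
      have h2 : b j ≤ b k := hmem.2
      have hj : j ≠ k := fun hj => he₂ (by rw [hj])
      rcases lt_or_gt_of_ne hj with hj | hj
      · have := h.gap _ _ hj
        linarith
      · have := h.gap _ _ hj
        have := h.lt j
        linarith
  · have hC : ∀ m, ContinuousOn (fun z : (Fin (g + 1) → ℝ) × ℝ => gapC a z.1 m)
        (K ×ˢ univ) := fun m =>
      (continuousOn_pi.mp (gapC_continuousOn hK hB) m).comp continuous_fst.continuousOn
        fun z hz => hz.1
    refine ContinuousOn.abs ?_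
    simp only [rpoly, eval_sub, eval_pow, eval_X, eval_finsetSum, eval_mul, eval_C]
    refine (by fun_prop : Continuous fun z : (Fin (g + 1) → ℝ) × ℝ => z.2 ^ g).continuousOn.sub ?_
    exact continuousOn_finsetSum _ fun m _ =>
      (hC m).mul (by fun_prop : Continuous fun z : (Fin (g + 1) → ℝ) × ℝ =>
        z.2 ^ (m : ℕ)).continuousOn

end

/-! ### Density of rational harmonic measures -/

section
variable {g : ℕ} {a b : Fin (g + 1) → ℝ}

/-- Small enlargements of the bands to the right are again bands. -/
theorem Bands.exists_margin (h : Bands a b) : ∃ δ > 0, ∀ b' : Fin (g + 1) → ℝ,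
    (∀ k, b k ≤ b' k) → (∀ k, b' k ≤ b k + δ) → Bands a b' := by
  have key : ∀ i : Fin (g + 1) × Fin (g + 1), ∃ δ > 0, i.1 < i.2 → b i.1 + δ < a i.2 := by
    intro i
    by_cases hi : i.1 < i.2
    · have := h.gap _ _ hi
      exact ⟨(a i.2 - b i.1) / 2, by linarith, fun _ => by linarith⟩
    · exact ⟨1, one_pos, fun h => absurd h hi⟩
  choose d hd hd' using key
  refine ⟨Finset.univ.inf' Finset.univ_nonempty d, ?_, fun b' h1 h2 => ⟨fun j => ?_, ?_⟩⟩
  · exact (Finset.lt_inf'_iff _).mpr fun i _ => hd i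
  · exact (h.lt j).trans_le (h1 j)
  · intro j k hjk
    have e1 := hd' (j, k) hjk
    have e2 := Finset.inf'_le d (Finset.mem_univ (j, k))
    have e3 := h2 j
    simp only at e1
    linarith

/-- Bands with rational harmonic measures are dense. With the left endpoints and the last right
endpoint fixed, rational targets slightly above the harmonic measures of the other bands are
attained at the admissible configuration of largest total length. -/
theorem exists_rational (h : Bands a b) {ε : ℝ} (hε : 0 < ε) :
    ∃ b' : Fin (g + 1) → ℝ, Bands a b' ∧ (∀ k, |b' k - b k| < ε) ∧
      ∀ k, ∃ q : ℚ, hm a b' k = q := by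
  obtain ⟨δ₀, hδ₀, hδB⟩ := h.exists_margin
  set δ := min δ₀ (ε / 2) with hδdef
  have hδ : 0 < δ := lt_min hδ₀ (by linarith)
  set u : Fin (g + 1) → ℝ := fun k => if k = Fin.last g then b k else b k + δ with hu
  have hul : u (Fin.last g) = b (Fin.last g) := by simp [hu]
  have huk : ∀ k, k ≠ Fin.last g → u k = b k + δ := fun k hk => by simp [hu, hk]
  have hule : ∀ k, u k ≤ b k + δ := by
    intro k; by_cases hk : k = Fin.last g
    · rw [hk, hul]; linarith
    · exact (huk k hk).le
  have hbu : b ≤ u := by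
    intro k; by_cases hk : k = Fin.last g
    · rw [hk, hul]
    · rw [huk k hk]; linarith
  set K : Set (Fin (g + 1) → ℝ) := Icc b u with hKdef
  have hK : IsCompact K := isCompact_Icc
  have hB : ∀ c ∈ K, Bands a c := fun c hc => hδB c hc.1 fun k =>
    (hc.2 k).trans ((hule k).trans (by linarith [min_le_left δ₀ (ε / 2)]))
  have hKl : ∀ c ∈ K, c (Fin.last g) = b (Fin.last g) := fun c hc =>
    le_antisymm ((hc.2 _).trans hul.le) (hc.1 _)
  have hcont : ∀ k, ContinuousOn (fun c => hm a c k) K := hm_continuousOn hK hB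
  -- on the part of the box with some coordinate at its maximum, the last harmonic measure drops
  -- by a definite amount `m`
  obtain ⟨m, hm0, hmK⟩ : ∃ m > 0, ∀ c ∈ K, ∀ j, j ≠ Fin.last g → c j = u j →
      hm a c (Fin.last g) ≤ hm a b (Fin.last g) - m := by
    set F : Set (Fin (g + 1) → ℝ) := K ∩ ⋃ j ∈ {j | j ≠ Fin.last g}, {c | c j = u j} with hF
    have hFc : IsCompact F := hK.inter_right (Set.Finite.isClosed_biUnion (toFinite _) fun j _ =>
      isClosed_eq (continuous_apply j) continuous_const)
    have hmem : ∀ c ∈ K, ∀ j, j ≠ Fin.last g → c j = u j → c ∈ F := fun c hc j hj hcj =>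
      ⟨hc, mem_iUnion₂.mpr ⟨j, hj, hcj⟩⟩
    rcases F.eq_empty_or_nonempty with hFe | hFn
    · exact ⟨1, one_pos, fun c hc j hj hcj => by
        have := hmem c hc j hj hcj
        rw [hFe] at this
        exact this.elim⟩
    · obtain ⟨c₀, hc₀, hmax⟩ := hFc.exists_isMaxOn hFn
        ((hcont (Fin.last g)).mono inter_subset_left)
      refine ⟨hm a b (Fin.last g) - hm a c₀ (Fin.last g), sub_pos.mpr ?_, ?_⟩
      · refine hm_strict h (hB _ hc₀.1) hc₀.1.1 (hKl _ hc₀.1).symm ?_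
        rintro rfl
        obtain ⟨j, hj, hcj⟩ := mem_iUnion₂.mp hc₀.2
        have hcj' : b j = u j := hcj
        rw [huk j hj] at hcj'
        linarith
      · intro c hc j hj hcj
        have : hm a c (Fin.last g) ≤ hm a c₀ (Fin.last g) := hmax (hmem c hc j hj hcj)
        linarith
  have hη : 0 < m / (g + 1) := by positivity
  have hq : ∀ k, ∃ q : ℚ, hm a b k < q ∧ (q : ℝ) < hm a b k + m / (g + 1) := fun k =>
    exists_rat_btwn (by linarith)
  choose q hq1 hq2 using hq
  set S : Set (Fin (g + 1) → ℝ) :=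
    {c | c ∈ K ∧ ∀ j, j ≠ Fin.last g → hm a c j ≤ q j} with hSdef
  have hSc : IsCompact S := by
    have hcl : IsClosed (K ∩ (fun c (j : {j // j ≠ Fin.last g}) => hm a c j) ⁻¹'
        Iic fun j => (q j : ℝ)) := by
      refine ContinuousOn.preimage_isClosed_of_isClosed ?_ hK.isClosed isClosed_Iic
      exact continuousOn_pi.mpr fun j => hcont j
    have hSe : S = K ∩ (fun c (j : {j // j ≠ Fin.last g}) => hm a c j) ⁻¹'
        Iic fun j => (q j : ℝ) := by
      ext c
      exact ⟨fun hc => ⟨hc.1, fun j => hc.2 j.1 j.2⟩, fun hc => ⟨hc.1, fun j hj => hc.2 ⟨j, hj⟩⟩⟩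
    rw [← hSe] at hcl
    exact hK.of_isClosed_subset hcl fun c hc => hc.1
  obtain ⟨c, hcS, hcmax⟩ := hSc.exists_isMaxOn
    ⟨b, ⟨le_rfl, hbu⟩, fun j _ => (hq1 j).le⟩
    (f := fun c : Fin (g + 1) → ℝ => ∑ k, c k) (by fun_prop)
  have hcB := hB c hcS.1
  have hsum : ∀ c ∈ K, hm a c (Fin.last g) = 1 - ∑ j : Fin g, hm a c j.castSucc := by
    intro c hc
    have := hm_sum (hB c hc)
    rw [Fin.sum_univ_castSucc] at this
    linarith
  have hbK : b ∈ K := ⟨le_rfl, hbu⟩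
  -- no coordinate of the maximizer reaches the upper end of the box
  have hlt : ∀ j, j ≠ Fin.last g → c j < u j := by
    intro j hj
    refine lt_of_le_of_ne (hcS.1.2 j) fun hcj => ?_
    have h1 := hmK c hcS.1 j hj hcj
    rw [hsum c hcS.1, hsum b hbK] at h1
    have h2 : ∑ j : Fin g, hm a c j.castSucc ≤
        ∑ j : Fin g, (hm a b j.castSucc + m / (g + 1)) :=
      Finset.sum_le_sum fun i _ => (hcS.2 _ (Fin.castSucc_ne_last i)).trans (hq2 _).le
    rw [Finset.sum_add_distrib, Finset.sum_const, Finset.card_univ, Fintype.card_fin,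
      nsmul_eq_mul] at h2
    have h3 : (g : ℝ) * (m / (g + 1)) < m := by
      rw [← mul_div_assoc, div_lt_iff₀ (by positivity)]
      nlinarith
    linarith
  have heq : ∀ j, j ≠ Fin.last g → hm a c j = q j := by
    intro j hj
    by_contra hne
    have hlt' : hm a c j < q j := lt_of_le_of_ne (hcS.2 j hj) hne
    -- otherwise the `j`-th band can be enlarged slightly
    set γ : ℝ → Fin (g + 1) → ℝ := fun t => Function.update c j t with hγ
    have hγc : Continuous γ := continuous_const.update j continuous_id
    have hγ0 : γ (c j) = c := Function.update_eq_self j c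
    have hγK : ∀ t ∈ Icc (c j) (u j), γ t ∈ K := by
      intro t ht
      constructor
      · intro k
        by_cases hk : k = j
        · subst hk; simp only [hγ, Function.update_self]; exact (hcS.1.1 k).trans ht.1
        · simp only [hγ, Function.update_of_ne hk]; exact hcS.1.1 k
      · intro k
        by_cases hk : k = j
        · subst hk; simp only [hγ, Function.update_self]; exact ht.2
        · simp only [hγ, Function.update_of_ne hk]; exact hcS.1.2 k
    have hc1 : ContinuousOn (fun t => hm a (γ t) j) (Icc (c j) (u j)) :=
      (hcont j).comp hγc.continuousOn hγK
    have hc2 : ContinuousWithinAt (fun t => hm a (γ t) j) (Ioo (c j) (u j)) (c j) :=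
      (hc1 (c j) ⟨le_rfl, (hlt j hj).le⟩).mono Ioo_subset_Icc_self
    have hev := hc2.eventually_lt (continuousWithinAt_const (b := (q j : ℝ)))
      (by simp only [hγ0]; exact hlt')
    have hnb : (nhdsWithin (c j) (Ioo (c j) (u j))).NeBot := by
      rw [nhdsWithin_Ioo_eq_nhdsGT (hlt j hj)]; infer_instance
    obtain ⟨t, ht1, ht⟩ := (hev.and self_mem_nhdsWithin).exists
    have htK := hγK t (Ioo_subset_Icc_self ht)
    have hle : ∀ k, c k ≤ γ t k := by
      intro k
      by_cases hk : k = j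
      · subst hk; simp only [hγ, Function.update_self]; exact ht.1.le
      · simp only [hγ, Function.update_of_ne hk]; exact le_rfl
    have htS : γ t ∈ S := by
      refine ⟨htK, fun k hk => ?_⟩
      by_cases hkj : k = j
      · subst hkj; exact ht1.le
      · refine (hm_mono hcB (hB _ htK) hle ((hKl c hcS.1).trans (hKl _ htK).symm) k ?_).trans
          (hcS.2 k hk)
        simp only [hγ, Function.update_of_ne hkj]
    have h5 : ∑ k, γ t k ≤ ∑ k, c k := hcmax htS
    have h6 : ∑ k, c k < ∑ k, γ t k := Finset.sum_lt_sum (fun k _ => hle k)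
      ⟨j, Finset.mem_univ j, by simp only [hγ, Function.update_self]; exact ht.1⟩
    linarith
  refine ⟨c, hcB, fun k => ?_, fun k => ?_⟩
  · have h1 := hcS.1.1 k
    have h2 := (hcS.1.2 k).trans (hule k)
    have h3 := min_le_right δ₀ (ε / 2)
    rw [abs_of_nonneg (by linarith)]
    linarith
  · rcases Fin.eq_castSucc_or_eq_last k with ⟨i, rfl⟩ | rfl
    · exact ⟨_, heq _ (Fin.castSucc_ne_last i)⟩
    · refine ⟨1 - ∑ j : Fin g, q j.castSucc, ?_⟩
      rw [hsum c hcS.1]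
      push_cast
      congr 1
      exact Finset.sum_congr rfl fun i _ => heq _ (Fin.castSucc_ne_last i)

end

theorem stmt19 (g : ℕ) (a b : Fin (g + 1) → ℝ)
    (h1 : ∀ j, a j < b j) (h2 : ∀ j k : Fin (g + 1), j < k → b j < a k)
    (ε : ℝ) (hε : 0 < ε) :
    ∃ a' b' : Fin (g + 1) → ℝ,
      (∀ j, a' j < b' j) ∧ (∀ j k : Fin (g + 1), j < k → b' j < a' k) ∧
      (∀ j, |a' j - a j| < ε) ∧ (∀ j, |b' j - b j| < ε) ∧
      ∃ P Q : Polynomial ℝ, ∃ c : ℝ, 0 < P.natDegree ∧ Q ≠ 0 ∧ c ≠ 0 ∧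
        P ^ 2 - (∏ j : Fin (g + 1), (X - C (a' j)) * (X - C (b' j))) * Q ^ 2 = C c := by
  have h : Bands a b := ⟨h1, h2⟩
  obtain ⟨b', hB, hb, hq⟩ := exists_rational h hε
  exact ⟨a, b', hB.lt, hB.gap, fun j => by simpa using hε, hb, pell_of_rational hB hq⟩
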